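/- arXiv:2212.08835 — 2 statements merged into one kernel-verified Lean document; each statement's English description precedes it below -/
import Mathlib

section
/- Let β, γ ∈ (0,1) satisfy β + γ > 1, and set c(β,γ) := max{1/(1−β), 1/(1−γ), 1/(β+γ−1)}. Then ∫_{-1}^{∞} dξ / (|ξ|^{β} (ξ+1)^{γ}) ≤ 6·c(β,γ), and for every x ∈ (-1,1), ∫_{-1}^{1} dt / (|t−x|^{β} |1−t²|^{γ}) ≤ 24·c(β,γ) / (1−x²)^{β+γ−1}. -/
open MeasureTheory Set Filter

noncomputable section

/-- Lebesgue measure restricted to the interval `(-1, 1)`. -/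
def μI : Measure ℝ := volume.restrict (Set.Ioo (-1 : ℝ) 1)

/-- The finite Hilbert transform: the principal-value limit
`T(f)(t) = lim_{ε→0⁺} (1/π) ∫_{x∈(-1,1), |x-t|≥ε} f(x)/(x-t) dx`. -/
def FHT (f : ℝ → ℂ) (t : ℝ) : ℂ :=
  limUnder (nhdsWithin (0 : ℝ) (Set.Ioi 0)) fun ε : ℝ =>
    (Real.pi : ℂ)⁻¹ *
      ∫ x in {x : ℝ | x ∈ Set.Ioo (-1 : ℝ) 1 ∧ ε ≤ |x - t|}, f x / ((x : ℂ) - (t : ℂ))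

/-- The operator `T̂(g)(x) = -(1-x²)^{-1/2} T(t ↦ √(1-t²) g(t))(x)`. -/
def hatT (g : ℝ → ℂ) (x : ℝ) : ℂ :=
  -((Real.sqrt (1 - x ^ 2) : ℂ))⁻¹ * FHT (fun t => (Real.sqrt (1 - t ^ 2) : ℂ) * g t) x

/-- Membership in the Zygmund space `L log L(-1,1)`:
`f` is a.e. measurable on `(-1,1)` and `∫ |f| log⁺|f| < ∞`. -/
def MemLlogL (f : ℝ → ℂ) : Prop :=
  AEStronglyMeasurable f μI ∧
    IntegrableOn (fun x => ‖f x‖ * max (Real.log ‖f x‖) 0) (Set.Ioo (-1 : ℝ) 1)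

/-- The distribution function `λ ↦ |{x ∈ (-1,1) : |f(x)| > λ}|`. -/
def distFun (f : ℝ → ℂ) (lam : ℝ) : ℝ :=
  (volume {x : ℝ | x ∈ Set.Ioo (-1 : ℝ) 1 ∧ lam < ‖f x‖}).toReal

/-- The decreasing rearrangement `f*` of `f`, a function on `(0,2)`. -/
def decRearr (f : ℝ → ℂ) (t : ℝ) : ℝ :=
  sInf {lam : ℝ | 0 ≤ lam ∧ distFun f lam ≤ t}

/-- The `L log L` norm `‖f‖ = ∫_0^2 f*(t) log(2e/t) dt`. -/
def llogLNorm (f : ℝ → ℂ) : ℝ :=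
  ∫ t in Set.Ioo (0 : ℝ) 2, decRearr f t * Real.log (2 * Real.exp 1 / t)

/-- The `L(log L)^α` norm `∫_0^2 f*(t) log^α(2e/t) dt` (for `α = 0` this is the `L¹` norm). -/
def zygNorm (α : ℝ) (f : ℝ → ℂ) : ℝ :=
  ∫ t in Set.Ioo (0 : ℝ) 2, decRearr f t * Real.log (2 * Real.exp 1 / t) ^ α

/-- Membership in the Zygmund space `L(log L)^α(-1,1)`. -/
def MemZyg (α : ℝ) (f : ℝ → ℂ) : Prop :=
  AEStronglyMeasurable f μI ∧
    IntegrableOn (fun t => decRearr f t * Real.log (2 * Real.exp 1 / t) ^ α)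
      (Set.Ioo (0 : ℝ) 2)

/-- Membership in `L(log L)²(-1,1)`: `∫ |f| (log(2+|f|))² < ∞`. -/
def MemLlogL2 (f : ℝ → ℂ) : Prop :=
  AEStronglyMeasurable f μI ∧
    IntegrableOn (fun x => ‖f x‖ * Real.log (2 + ‖f x‖) ^ 2) (Set.Ioo (-1 : ℝ) 1)

/-- The constant `c(β,γ) = max{1/(1-β), 1/(1-γ), 1/(β+γ-1)}`. -/
def cBG (β γ : ℝ) : ℝ := max (max (1 / (1 - β)) (1 / (1 - γ))) (1 / (β + γ - 1))

/-!
On `(-1, 0)` the half-line integral is, up to reflection, the Beta integral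
`∫₀¹ u^(-β) (1 - u)^(-γ) du`. Below `u = 1/2` the factor `1 - u` is bounded away from zero, so what
remains is a pure power, and `u ↦ 1 - u` exchanges the two halves. On `(0, ∞)` the integrand is at
most `ξ^(-β)` before `1` and at most `ξ^(-(β + γ))` after it.

For `t ∈ [0, 1)` one has `1 - t ≤ 1 - t ^ 2`, and the affine map `ξ ↦ x - (1 - x) ξ` carries the
half-line integral to `∫_{-∞}^1 |t - x|^(-β) (1 - t)^(-γ) dt` with the factor `(1 - x)^(1 - β - γ)`.
The interval `(-1, 0]` follows by replacing `x` with `-x`.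
-/

theorem one_div_rpow_mul_rpow {a b : ℝ} (ha : 0 ≤ a) (hb : 0 ≤ b) (p q : ℝ) :
    1 / (a ^ p * b ^ q) = a ^ (-p) * b ^ (-q) := by
  rw [Real.rpow_neg ha, Real.rpow_neg hb, one_div, mul_inv]

theorem setLIntegral_image_affine {a : ℝ} (ha : a ≠ 0) (b : ℝ) {s : Set ℝ} (hs : MeasurableSet s)
    (g : ℝ → ENNReal) :
    ∫⁻ t in (fun ξ => a * ξ + b) '' s, g t = ENNReal.ofReal |a| * ∫⁻ ξ in s, g (a * ξ + b) := by
  have hderiv : ∀ ξ ∈ s, HasDerivWithinAt (fun ξ => a * ξ + b) a s ξ := fun ξ _ => by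
    simpa using (((hasDerivAt_id ξ).const_mul a).add_const b).hasDerivWithinAt
  have hinj : InjOn (fun ξ => a * ξ + b) s := fun ξ _ η _ h => by simpa [ha] using h
  rw [lintegral_image_eq_lintegral_abs_deriv_mul hs hderiv hinj,
    lintegral_const_mul' _ _ ENNReal.ofReal_ne_top]

theorem setLIntegral_Ioc_zero_rpow_neg {p a : ℝ} (hp : p < 1) (ha : 0 ≤ a) :
    ∫⁻ x in Ioc 0 a, ENNReal.ofReal (x ^ (-p)) = ENNReal.ofReal (a ^ (1 - p) / (1 - p)) := by
  have hint : IntegrableOn (fun x : ℝ => x ^ (-p)) (Ioc 0 a) :=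
    (intervalIntegrable_iff_integrableOn_Ioc_of_le ha).1
      (intervalIntegral.intervalIntegrable_rpow' (by linarith))
  have hnonneg : ∀ᵐ x ∂volume.restrict (Ioc 0 a), 0 ≤ x ^ (-p) :=
    ae_restrict_of_forall_mem measurableSet_Ioc fun x hx => Real.rpow_nonneg hx.1.le _
  rw [← ofReal_integral_eq_lintegral_ofReal hint hnonneg, ← intervalIntegral.integral_of_le ha,
    integral_rpow (Or.inl (by linarith)), neg_add_eq_sub, Real.zero_rpow (by linarith), sub_zero]

theorem setLIntegral_Ioi_rpow_neg {p a : ℝ} (hp : 1 < p) (ha : 0 < a) :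
    ∫⁻ x in Ioi a, ENNReal.ofReal (x ^ (-p)) = ENNReal.ofReal (a ^ (1 - p) / (p - 1)) := by
  have hint : IntegrableOn (fun x : ℝ => x ^ (-p)) (Ioi a) :=
    integrableOn_Ioi_rpow_of_lt (by linarith) ha
  have hnonneg : ∀ᵐ x ∂volume.restrict (Ioi a), 0 ≤ x ^ (-p) :=
    ae_restrict_of_forall_mem measurableSet_Ioi fun x hx => Real.rpow_nonneg (ha.trans hx).le _
  rw [← ofReal_integral_eq_lintegral_ofReal hint hnonneg,
    integral_Ioi_rpow_of_lt (by linarith) ha, neg_add_eq_sub, ← neg_sub p 1, neg_div_neg_eq]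

theorem setLIntegral_Ioc_zero_half_beta_le {β γ : ℝ} (hβ : β < 1) (hγ : 0 ≤ γ) :
    ∫⁻ x in Ioc (0 : ℝ) (1 / 2), ENNReal.ofReal (x ^ (-β) * (1 - x) ^ (-γ))
      ≤ ENNReal.ofReal (2 ^ (β + γ - 1) / (1 - β)) := by
  have hbound : ∀ x ∈ Ioc (0 : ℝ) (1 / 2), (1 - x) ^ (-γ) ≤ 2 ^ γ := fun x hx => by
    have h := Real.rpow_le_rpow_of_nonpos (by norm_num : (0 : ℝ) < 2⁻¹)
      (by linarith [hx.2] : 2⁻¹ ≤ 1 - x) (neg_nonpos.2 hγ)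
    rwa [Real.inv_rpow zero_le_two, ← Real.rpow_neg zero_le_two, neg_neg] at h
  calc ∫⁻ x in Ioc (0 : ℝ) (1 / 2), ENNReal.ofReal (x ^ (-β) * (1 - x) ^ (-γ))
      ≤ ∫⁻ x in Ioc (0 : ℝ) (1 / 2), ENNReal.ofReal (2 ^ γ) * ENNReal.ofReal (x ^ (-β)) := by
        refine setLIntegral_mono' measurableSet_Ioc fun x hx => ?_
        rw [← ENNReal.ofReal_mul (by positivity), mul_comm]
        have := Real.rpow_nonneg hx.1.le (-β)
        gcongr
        exact hbound x hx
    _ = ENNReal.ofReal (2 ^ γ * ((1 / 2) ^ (1 - β) / (1 - β))) := by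
        rw [lintegral_const_mul' _ _ ENNReal.ofReal_ne_top,
          setLIntegral_Ioc_zero_rpow_neg hβ (by norm_num), ← ENNReal.ofReal_mul (by positivity)]
    _ = ENNReal.ofReal (2 ^ (β + γ - 1) / (1 - β)) := by
        rw [one_div, Real.inv_rpow zero_le_two, ← Real.rpow_neg zero_le_two, ← mul_div_assoc,
          ← Real.rpow_add two_pos]
        ring_nf

theorem setLIntegral_Ico_half_one_beta_eq (β γ : ℝ) :
    ∫⁻ x in Ico (1 / 2 : ℝ) 1, ENNReal.ofReal (x ^ (-β) * (1 - x) ^ (-γ))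
      = ∫⁻ x in Ioc (0 : ℝ) (1 / 2), ENNReal.ofReal (x ^ (-γ) * (1 - x) ^ (-β)) := by
  have hreflect := (volume.measurePreserving_sub_left (1 : ℝ)).setLIntegral_comp_preimage_emb
    (MeasurableEquiv.subLeft 1).measurableEmbedding
    (fun x => ENNReal.ofReal (x ^ (-β) * (1 - x) ^ (-γ))) (Ico (1 / 2) 1)
  rw [← hreflect, preimage_const_sub_Ico]
  norm_num [mul_comm]

theorem setLIntegral_Ioo_zero_one_beta_le {β γ : ℝ} (hβ : β ∈ Ico 0 1) (hγ : γ ∈ Ico 0 1) :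
    ∫⁻ x in Ioo (0 : ℝ) 1, ENNReal.ofReal (x ^ (-β) * (1 - x) ^ (-γ))
      ≤ ENNReal.ofReal (2 ^ (β + γ - 1) * (1 / (1 - β) + 1 / (1 - γ))) := by
  have hβ' : 0 < 1 - β := sub_pos.2 hβ.2
  have hγ' : 0 < 1 - γ := sub_pos.2 hγ.2
  rw [← Ioc_union_Ioo_eq_Ioo (b := 1 / 2) (by norm_num) (by norm_num)]
  calc _ ≤ _ := lintegral_mono_set (union_subset_union_right _ Ioo_subset_Ico_self)
    _ ≤ _ := lintegral_union_le _ _ _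
    _ ≤ ENNReal.ofReal (2 ^ (β + γ - 1) / (1 - β))
          + ENNReal.ofReal (2 ^ (γ + β - 1) / (1 - γ)) := by
        rw [setLIntegral_Ico_half_one_beta_eq]
        exact add_le_add (setLIntegral_Ioc_zero_half_beta_le hβ.2 hγ.1)
          (setLIntegral_Ioc_zero_half_beta_le hγ.2 hβ.1)
    _ = ENNReal.ofReal (2 ^ (β + γ - 1) * (1 / (1 - β) + 1 / (1 - γ))) := by
        rw [← ENNReal.ofReal_add (by positivity) (by positivity), add_comm γ β]
        ring_nf

theorem setLIntegral_Ioi_zero_beta_le {β γ : ℝ} (hβ : β < 1) (hβγ : 1 < β + γ) :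
    ∫⁻ x in Ioi (0 : ℝ), ENNReal.ofReal (x ^ (-β) * (1 + x) ^ (-γ))
      ≤ ENNReal.ofReal (1 / (1 - β) + 1 / (β + γ - 1)) := by
  have hnear : ∫⁻ x in Ioc (0 : ℝ) 1, ENNReal.ofReal (x ^ (-β) * (1 + x) ^ (-γ))
      ≤ ENNReal.ofReal (1 / (1 - β)) := by
    have hpow := setLIntegral_Ioc_zero_rpow_neg hβ zero_le_one
    rw [Real.one_rpow] at hpow
    rw [← hpow]
    refine setLIntegral_mono' measurableSet_Ioc fun x ⟨hx, _⟩ => ENNReal.ofReal_le_ofReal ?_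
    exact mul_le_of_le_one_right (Real.rpow_nonneg hx.le _)
      (Real.rpow_le_one_of_one_le_of_nonpos (by linarith) (by linarith))
  have hfar : ∫⁻ x in Ioi (1 : ℝ), ENNReal.ofReal (x ^ (-β) * (1 + x) ^ (-γ))
      ≤ ENNReal.ofReal (1 / (β + γ - 1)) := by
    have hpow := setLIntegral_Ioi_rpow_neg hβγ one_pos
    rw [Real.one_rpow] at hpow
    rw [← hpow]
    refine setLIntegral_mono' measurableSet_Ioi fun x hx => ENNReal.ofReal_le_ofReal ?_
    have hx0 : 0 < x := one_pos.trans hx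
    rw [neg_add, Real.rpow_add hx0]
    exact mul_le_mul_of_nonneg_left (Real.rpow_le_rpow_of_nonpos hx0 (by linarith) (by linarith))
      (Real.rpow_nonneg hx0.le _)
  rw [← Ioc_union_Ioi_eq_Ioi zero_le_one,
    ENNReal.ofReal_add (one_div_nonneg.2 (by linarith)) (one_div_nonneg.2 (by linarith))]
  exact (lintegral_union_le _ _ _).trans (add_le_add hnear hfar)

/-- The half-line integral `∫_{-1}^∞ dξ / (|ξ|^β (ξ+1)^γ)`, to which the integral over `(-1, 1)`
is reduced by rescaling. It takes values in `[0, ∞]`, so no convergence is presupposed. -/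
def halfLineIntegral (β γ : ℝ) : ENNReal :=
  ∫⁻ ξ in Ioi (-1 : ℝ), ENNReal.ofReal (1 / (|ξ| ^ β * (ξ + 1) ^ γ))

theorem halfLineIntegral_eq_add (β γ : ℝ) :
    halfLineIntegral β γ = (∫⁻ x in Ioo (0 : ℝ) 1, ENNReal.ofReal (x ^ (-β) * (1 - x) ^ (-γ)))
      + ∫⁻ x in Ioi (0 : ℝ), ENNReal.ofReal (x ^ (-β) * (1 + x) ^ (-γ)) := by
  have hleft : ∫⁻ ξ in Ioc (-1 : ℝ) 0, ENNReal.ofReal (1 / (|ξ| ^ β * (ξ + 1) ^ γ))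
      = ∫⁻ x in Ioo (0 : ℝ) 1, ENNReal.ofReal (x ^ (-β) * (1 - x) ^ (-γ)) := by
    have hreflect := (Measure.measurePreserving_neg volume).setLIntegral_comp_preimage_emb
      (MeasurableEquiv.neg ℝ).measurableEmbedding
      (fun ξ => ENNReal.ofReal (1 / (|ξ| ^ β * (ξ + 1) ^ γ))) (Ioo (-1) 0)
    rw [← setLIntegral_congr Ioo_ae_eq_Ioc, ← hreflect, neg_preimage, neg_Ioo, neg_zero, neg_neg]
    refine setLIntegral_congr_fun measurableSet_Ioo fun x ⟨hx0, hx1⟩ => ?_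
    simp only [abs_neg, abs_of_pos hx0, neg_add_eq_sub]
    rw [one_div_rpow_mul_rpow hx0.le (by linarith)]
  have hright : ∫⁻ ξ in Ioi (0 : ℝ), ENNReal.ofReal (1 / (|ξ| ^ β * (ξ + 1) ^ γ))
      = ∫⁻ x in Ioi (0 : ℝ), ENNReal.ofReal (x ^ (-β) * (1 + x) ^ (-γ)) := by
    refine setLIntegral_congr_fun measurableSet_Ioi fun x (hx : 0 < x) => ?_
    simp only [abs_of_pos hx, add_comm x 1]
    rw [one_div_rpow_mul_rpow hx.le (by linarith)]
  rw [halfLineIntegral, ← Ioc_union_Ioi_eq_Ioi (neg_nonpos.2 zero_le_one),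
    lintegral_union measurableSet_Ioi (Ioc_disjoint_Ioi le_rfl), hleft, hright]

theorem halfLineIntegral_le_six_mul_cBG {β γ : ℝ} (hβ : β < 1) (hγ : γ < 1) (hβγ : 1 < β + γ) :
    halfLineIntegral β γ ≤ ENNReal.ofReal (6 * cBG β γ) := by
  have hβc : 1 / (1 - β) ≤ cBG β γ := (le_max_left _ _).trans (le_max_left _ _)
  have hγc : 1 / (1 - γ) ≤ cBG β γ := (le_max_right _ _).trans (le_max_left _ _)
  have hβγc : 1 / (β + γ - 1) ≤ cBG β γ := le_max_right _ _
  have : 0 < 1 / (1 - β) := one_div_pos.2 (sub_pos.2 hβ)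
  have : 0 < 1 / (1 - γ) := one_div_pos.2 (sub_pos.2 hγ)
  have : 0 < 1 / (β + γ - 1) := one_div_pos.2 (sub_pos.2 hβγ)
  have htwo : (2 : ℝ) ^ (β + γ - 1) ≤ 2 := by
    simpa using Real.rpow_le_rpow_of_exponent_le one_le_two
      (by linarith : β + γ - 1 ≤ 1)
  rw [halfLineIntegral_eq_add]
  calc _ ≤ _ := add_le_add
        (setLIntegral_Ioo_zero_one_beta_le ⟨by linarith, hβ⟩ ⟨by linarith, hγ⟩)
        (setLIntegral_Ioi_zero_beta_le hβ hβγ)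
    _ = ENNReal.ofReal (2 ^ (β + γ - 1) * (1 / (1 - β) + 1 / (1 - γ))
          + (1 / (1 - β) + 1 / (β + γ - 1))) :=
        (ENNReal.ofReal_add (by positivity) (by positivity)).symm
    _ ≤ ENNReal.ofReal (2 * (cBG β γ + cBG β γ) + (cBG β γ + cBG β γ)) := by gcongr
    _ = ENNReal.ofReal (6 * cBG β γ) := by ring_nf

theorem setLIntegral_Iio_eq_mul_halfLineIntegral (β γ : ℝ) {x b : ℝ} (hxb : x < b) :
    ∫⁻ t in Iio b, ENNReal.ofReal (1 / (|t - x| ^ β * (b - t) ^ γ))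
      = ENNReal.ofReal ((b - x) ^ (1 - β - γ)) * halfLineIntegral β γ := by
  have hd : 0 < b - x := sub_pos.2 hxb
  have himage : (fun ξ => -(b - x) * ξ + x) '' Ioi (-1 : ℝ) = Iio b := by
    simp only [neg_mul, neg_add_eq_sub]
    rw [← image_image (x - ·) ((b - x) * ·), image_mul_left_Ioi hd, image_const_sub_Ioi]
    ring_nf
  have hscale : ∀ ξ ∈ Ioi (-1 : ℝ),
      ENNReal.ofReal (1 / (|-(b - x) * ξ + x - x| ^ β * (b - (-(b - x) * ξ + x)) ^ γ))
        = ENNReal.ofReal ((b - x) ^ (-β - γ))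
          * ENNReal.ofReal (1 / (|ξ| ^ β * (ξ + 1) ^ γ)) := by
    intro ξ (hξ : -1 < ξ)
    have hfar : b - (-(b - x) * ξ + x) = (b - x) * (ξ + 1) := by ring
    rw [hfar, add_sub_cancel_right, abs_mul, abs_neg, abs_of_pos hd,
      Real.mul_rpow hd.le (abs_nonneg ξ), Real.mul_rpow hd.le (by linarith),
      ← ENNReal.ofReal_mul (by positivity), sub_eq_add_neg (-β), Real.rpow_add hd,
      ← one_div_rpow_mul_rpow hd.le hd.le]
    congr 1
    ring
  have hjacobian : (b - x) * (b - x) ^ (-β - γ) = (b - x) ^ (1 - β - γ) := by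
    rw [mul_comm, ← Real.rpow_add_one hd.ne']
    ring_nf
  rw [← himage, setLIntegral_image_affine (neg_ne_zero.2 hd.ne') _ measurableSet_Ioi,
    setLIntegral_congr_fun measurableSet_Ioi hscale,
    lintegral_const_mul' _ _ ENNReal.ofReal_ne_top, ← mul_assoc, abs_neg, abs_of_pos hd,
    ← ENNReal.ofReal_mul hd.le, hjacobian, halfLineIntegral]

theorem setLIntegral_Ico_kernel_le_mul_halfLineIntegral {β γ x : ℝ} (hx : x ∈ Ioo (-1) 1)
    (hγ : 0 ≤ γ) (hβγ : 1 ≤ β + γ) :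
    ∫⁻ t in Ico (0 : ℝ) 1, ENNReal.ofReal (1 / (|t - x| ^ β * |1 - t ^ 2| ^ γ))
      ≤ ENNReal.ofReal ((2 / (1 - x ^ 2)) ^ (β + γ - 1)) * halfLineIntegral β γ := by
  obtain ⟨hx0, hx1⟩ := hx
  have hd : 0 < 1 - x ^ 2 := by nlinarith
  have hweight : ∀ t ∈ Ico (0 : ℝ) 1, 1 / (|t - x| ^ β * |1 - t ^ 2| ^ γ)
      ≤ 1 / (|t - x| ^ β * (1 - t) ^ γ) := fun t ⟨ht0, ht1⟩ => by
    have hle : 1 - t ≤ |1 - t ^ 2| := le_abs.2 (Or.inl (by nlinarith))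
    have : 0 < 1 - t := sub_pos.2 ht1
    -- At `t = x` both denominators may vanish, so the factors are compared after inversion.
    rw [one_div, one_div, mul_inv, mul_inv]
    gcongr
  have hfactor : (1 - x) ^ (1 - β - γ) ≤ (2 / (1 - x ^ 2)) ^ (β + γ - 1) := by
    have hinv : (1 - x)⁻¹ ≤ 2 / (1 - x ^ 2) := by
      rw [inv_le_comm₀ (by linarith) (by positivity), inv_div]
      nlinarith
    calc (1 - x) ^ (1 - β - γ) = (1 - x)⁻¹ ^ (β + γ - 1) := by
          rw [Real.inv_rpow (by linarith), ← Real.rpow_neg (by linarith)]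
          ring_nf
      _ ≤ (2 / (1 - x ^ 2)) ^ (β + γ - 1) :=
          Real.rpow_le_rpow (inv_nonneg.2 (by linarith)) hinv (by linarith)
  calc _ ≤ ∫⁻ t in Ico (0 : ℝ) 1, ENNReal.ofReal (1 / (|t - x| ^ β * (1 - t) ^ γ)) :=
        setLIntegral_mono' measurableSet_Ico fun t ht => ENNReal.ofReal_le_ofReal (hweight t ht)
    _ ≤ ∫⁻ t in Iio (1 : ℝ), ENNReal.ofReal (1 / (|t - x| ^ β * (1 - t) ^ γ)) :=
        lintegral_mono_set Ico_subset_Iio_self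
    _ = ENNReal.ofReal ((1 - x) ^ (1 - β - γ)) * halfLineIntegral β γ :=
        setLIntegral_Iio_eq_mul_halfLineIntegral β γ hx1
    _ ≤ _ := by gcongr

theorem setLIntegral_Ioc_kernel_eq_setLIntegral_Ico (β γ x : ℝ) :
    ∫⁻ t in Ioc (-1 : ℝ) 0, ENNReal.ofReal (1 / (|t - x| ^ β * |1 - t ^ 2| ^ γ))
      = ∫⁻ t in Ico (0 : ℝ) 1, ENNReal.ofReal (1 / (|t - -x| ^ β * |1 - t ^ 2| ^ γ)) := by
  have hreflect := (Measure.measurePreserving_neg volume).setLIntegral_comp_preimage_emb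
    (MeasurableEquiv.neg ℝ).measurableEmbedding
    (fun t => ENNReal.ofReal (1 / (|t - x| ^ β * |1 - t ^ 2| ^ γ))) (Ioc (-1) 0)
  have habs : ∀ t : ℝ, |-t - x| = |t - -x| := fun t => by rw [← abs_neg, neg_sub', neg_neg]
  simp only [neg_preimage, neg_Ioc, neg_zero, neg_neg, neg_sq, habs] at hreflect
  exact hreflect.symm

theorem setLIntegral_Ioo_kernel_le_mul_halfLineIntegral {β γ x : ℝ} (hx : x ∈ Ioo (-1) 1)
    (hγ : 0 ≤ γ) (hβγ : 1 ≤ β + γ) :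
    ∫⁻ t in Ioo (-1 : ℝ) 1, ENNReal.ofReal (1 / (|t - x| ^ β * |1 - t ^ 2| ^ γ))
      ≤ ENNReal.ofReal (2 ^ (β + γ) / (1 - x ^ 2) ^ (β + γ - 1)) * halfLineIntegral β γ := by
  have hd : 0 < 1 - x ^ 2 := by nlinarith [hx.1, hx.2]
  have hneg : -x ∈ Ioo (-1 : ℝ) 1 := ⟨neg_lt_neg hx.2, neg_lt.1 hx.1⟩
  have hleft := setLIntegral_Ico_kernel_le_mul_halfLineIntegral hneg hγ hβγ
  rw [← setLIntegral_Ioc_kernel_eq_setLIntegral_Ico, neg_sq] at hleft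
  have hright := setLIntegral_Ico_kernel_le_mul_halfLineIntegral hx hγ hβγ
  have hconst : 2 ^ (β + γ) / (1 - x ^ 2) ^ (β + γ - 1)
      = (2 / (1 - x ^ 2)) ^ (β + γ - 1) + (2 / (1 - x ^ 2)) ^ (β + γ - 1) := by
    rw [Real.div_rpow zero_le_two hd.le, Real.rpow_sub_one two_ne_zero]
    ring
  rw [← Ioc_union_Ioo_eq_Ioo (b := 0) (by norm_num) one_pos, hconst,
    ENNReal.ofReal_add (by positivity) (by positivity), add_mul]
  calc _ ≤ _ := lintegral_mono_set (union_subset_union_right _ Ioo_subset_Ico_self)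
    _ ≤ _ := lintegral_union_le _ _ _
    _ ≤ _ := add_le_add hleft hright

/-- Lemma on the auxiliary integrals: for `β, γ ∈ (0,1)` with `β + γ > 1`,
`∫_{-1}^∞ dξ/(|ξ|^β (ξ+1)^γ) ≤ 6 c(β,γ)` and for `x ∈ (-1,1)`,
`∫_{-1}^1 dt/(|t-x|^β |1-t²|^γ) ≤ 24 c(β,γ)/(1-x²)^{β+γ-1}`. -/
theorem integral_bounds (β γ : ℝ) (hβ : β ∈ Set.Ioo (0 : ℝ) 1) (hγ : γ ∈ Set.Ioo (0 : ℝ) 1)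
    (hβγ : 1 < β + γ) :
    (∫⁻ ξ in Set.Ioi (-1 : ℝ), ENNReal.ofReal (1 / (|ξ| ^ β * (ξ + 1) ^ γ))
      ≤ ENNReal.ofReal (6 * cBG β γ)) ∧
    ∀ x ∈ Set.Ioo (-1 : ℝ) 1,
      ∫⁻ t in Set.Ioo (-1 : ℝ) 1, ENNReal.ofReal (1 / (|t - x| ^ β * |1 - t ^ 2| ^ γ))
        ≤ ENNReal.ofReal (24 * cBG β γ / (1 - x ^ 2) ^ (β + γ - 1)) := by
  have hhalf : halfLineIntegral β γ ≤ ENNReal.ofReal (6 * cBG β γ) :=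
    halfLineIntegral_le_six_mul_cBG hβ.2 hγ.2 hβγ
  refine ⟨hhalf, fun x hx => ?_⟩
  have hd : 0 < 1 - x ^ 2 := by nlinarith [hx.1, hx.2]
  have hfour : (2 : ℝ) ^ (β + γ) ≤ 4 := by
    calc (2 : ℝ) ^ (β + γ) ≤ 2 ^ (2 : ℝ) :=
          Real.rpow_le_rpow_of_exponent_le one_le_two (by linarith [hβ.2, hγ.2])
      _ = 4 := by norm_num
  calc _ ≤ ENNReal.ofReal (2 ^ (β + γ) / (1 - x ^ 2) ^ (β + γ - 1)) * halfLineIntegral β γ :=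
        setLIntegral_Ioo_kernel_le_mul_halfLineIntegral hx hγ.1.le hβγ.le
    _ ≤ ENNReal.ofReal (4 / (1 - x ^ 2) ^ (β + γ - 1)) * ENNReal.ofReal (6 * cBG β γ) := by gcongr
    _ = ENNReal.ofReal (24 * cBG β γ / (1 - x ^ 2) ^ (β + γ - 1)) := by
        rw [← ENNReal.ofReal_mul (by positivity)]
        ring_nf
end
end

section
/- Let g ∈ LlogL(-1,1). Then T̂(g) ∈ L^1(-1,1), T(T̂(g)) = g almost everywhere in (-1,1), and moreover ∫_{-1}^1 T̂(g)(x) dx = 0. -/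
open MeasureTheory Set Filter

noncomputable section

/-!
Put `t = cos θ` and regard `√(1 - t²) g(t)` as the odd function `sin θ · g(cos θ)` on the circle.
Its conjugate function is even, of the form `sin θ · h(cos θ)` on `(0, π)`. That `h` is integrable
is Zygmund's inequality, obtained for polynomials by duality with conjugates of bounded functions,
which are exponentially integrable, and extended to `L log L` by density.

The conjugacy is a family of identities between the cosine moments of `√(1 - t²) h` and the sine
moments of `√(1 - t²) g` in the variable `θ`. The zeroth one says `∫ h = 0`. Summed against a
geometric series, they say that in the upper and the lower half-plane the Cauchy transform of
`√(1 - t²) g` is `i√(1 - w²)`, respectively `-i√(1 - w²)`, times that of `h`. By Plemelj's formulas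
the boundary values of a Cauchy transform from the two sides have the function as their difference
and its finite Hilbert transform as their sum, up to constants. The change of sign exchanges the two
formulas, so that `T h = g` and `T (√(1 - t²) g) = -√(1 - x²) h`, and the latter says `h = T̂ g`.
-/

namespace FiniteHilbert

open Polynomial
open scoped Real Topology ComplexConjugate

/-! ### Polynomials on the unit circle -/

/-- The boundary value at `e^{iθ}` of a real polynomial. Writing `A(e^{iθ}) = u(θ) + i v(θ)`, the
functions `u` and `v` form a pair of conjugate trigonometric polynomials, `u` even and `v` odd. -/
def circleEval (θ : ℝ) : ℝ[X] →ₐ[ℝ] ℂ := aeval (Complex.exp (θ * Complex.I))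

section CircleEval

variable (A F : ℝ[X]) (θ : ℝ)

lemma circleEval_X : circleEval θ X = Complex.exp (θ * Complex.I) := aeval_X _

@[simp] lemma circleEval_C (a : ℝ) : circleEval θ (C a) = a := aeval_C _ _

@[simp] lemma re_circleEval_X : (circleEval θ X).re = Real.cos θ := by
  rw [circleEval_X, Complex.exp_ofReal_mul_I_re]

@[simp] lemma im_circleEval_X : (circleEval θ X).im = Real.sin θ := by
  rw [circleEval_X, Complex.exp_ofReal_mul_I_im]

lemma circleEval_X_pow (n : ℕ) :
    circleEval θ (X ^ n) = Complex.exp ((n * θ : ℝ) * Complex.I) := by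
  rw [map_pow, circleEval_X, ← Complex.exp_nat_mul]
  push_cast
  rw [mul_assoc]

lemma re_circleEval_X_pow (n : ℕ) : (circleEval θ (X ^ n)).re = Real.cos (n * θ) := by
  rw [circleEval_X_pow, Complex.exp_ofReal_mul_I_re]

lemma im_circleEval_X_pow (n : ℕ) : (circleEval θ (X ^ n)).im = Real.sin (n * θ) := by
  rw [circleEval_X_pow, Complex.exp_ofReal_mul_I_im]

@[fun_prop]
lemma continuous_circleEval : Continuous fun θ => circleEval θ A :=
  A.continuous_aeval.comp (by fun_prop)

@[fun_prop]
lemma continuous_re_circleEval : Continuous fun θ => (circleEval θ A).re :=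
  Complex.continuous_re.comp (continuous_circleEval A)

@[fun_prop]
lemma continuous_im_circleEval : Continuous fun θ => (circleEval θ A).im :=
  Complex.continuous_im.comp (continuous_circleEval A)

lemma circleEval_two_pi_sub : circleEval (2 * π - θ) A = conj (circleEval θ A) := by
  have hexp : Complex.exp ((2 * π - θ : ℝ) * Complex.I) = conj (Complex.exp (θ * Complex.I)) := by
    rw [← Complex.exp_conj, map_mul, Complex.conj_ofReal, Complex.conj_I]
    push_cast
    rw [sub_mul, sub_eq_add_neg, add_comm, Complex.exp_periodic, mul_neg]
  rw [circleEval, hexp, aeval_conj, circleEval]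

lemma integral_zero_two_mul {E : Type*} [NormedAddCommGroup E] [NormedSpace ℝ E] {f : ℝ → E}
    (hf : Continuous f) (a : ℝ) :
    ∫ x in (0 : ℝ)..2 * a, f x = ∫ x in (0 : ℝ)..a, (f x + f (2 * a - x)) := by
  have hint : ∀ b c, IntervalIntegrable f volume b c := hf.intervalIntegrable
  rw [intervalIntegral.integral_add (hint _ _)
      ((by fun_prop : Continuous _).intervalIntegrable _ _),
    intervalIntegral.integral_comp_sub_left f,
    ← intervalIntegral.integral_add_adjacent_intervals (hint 0 a) (hint a _)]
  congr 2 <;> ring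

lemma integral_circleEval {Φ : ℂ → ℂ} (hΦ : Differentiable ℂ Φ) :
    ∫ θ in (0 : ℝ)..2 * π, Φ (circleEval θ A) = 2 * π * Φ (A.coeff 0) := by
  have hd : Differentiable ℂ fun z : ℂ => Φ (aeval z A) :=
    hΦ.comp (Polynomial.differentiable_aeval A)
  have havg := DiffContOnCl.circleAverage (f := fun z => Φ (aeval z A)) (c := 0) (R := 1)
    hd.diffContOnCl
  simp only [Real.circleAverage_def, circleMap, Complex.ofReal_one, one_mul, zero_add] at havg
  have hzero : aeval (0 : ℂ) A = A.coeff 0 := (coeff_zero_eq_aeval_zero' A).symm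
  rw [hzero, inv_smul_eq_iff₀ Real.two_pi_pos.ne', Complex.real_smul] at havg
  exact_mod_cast havg

lemma integral_re_circleEval {Φ : ℂ → ℂ} (hΦ : Differentiable ℂ Φ)
    (hconj : ∀ z, Φ (conj z) = conj (Φ z)) :
    ∫ θ in (0 : ℝ)..π, (Φ (circleEval θ A)).re = π * (Φ (A.coeff 0)).re := by
  have hcont : Continuous fun θ => Φ (circleEval θ A) := hΦ.continuous.comp (by fun_prop)
  have hfold := integral_zero_two_mul hcont π
  simp_rw [circleEval_two_pi_sub, hconj, Complex.add_conj] at hfold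
  rw [integral_circleEval A hΦ, intervalIntegral.integral_ofReal,
    intervalIntegral.integral_const_mul] at hfold
  have hre := congrArg Complex.re hfold
  rw [← Complex.ofReal_ofNat, ← Complex.ofReal_mul, Complex.re_ofReal_mul, Complex.ofReal_re] at hre
  linarith

lemma integral_re_circleEval_eq_zero {B : ℝ[X]} (hB : B.coeff 0 = 0) :
    ∫ θ in (0 : ℝ)..π, (circleEval θ B).re = 0 := by
  simpa [hB] using integral_re_circleEval B differentiable_id fun _ => rfl

lemma integral_im_mul_im_circleEval (hF : F.coeff 0 = 0) :
    ∫ θ in (0 : ℝ)..π, (circleEval θ F).im * (circleEval θ A).im =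
      ∫ θ in (0 : ℝ)..π, (circleEval θ F).re * (circleEval θ A).re := by
  have hFA := integral_re_circleEval_eq_zero (B := F * A) (by simp [hF])
  simp only [map_mul, Complex.mul_re] at hFA
  rw [intervalIntegral.integral_sub ((by fun_prop : Continuous _).intervalIntegrable _ _)
    ((by fun_prop : Continuous _).intervalIntegrable _ _)] at hFA
  linarith

variable {A} in
/-- Mean value property of `cos ∘ A`, where `Re cos (u + iv) = cos u cosh v` and `cos u ≥ 1/2`. -/
lemma integral_exp_abs_im_circleEval_le (hA : ∀ θ, |(circleEval θ A).re| ≤ 1) :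
    ∫ θ in (0 : ℝ)..π, Real.exp |(circleEval θ A).im| ≤ 4 * π := by
  have hcos_re : ∀ z : ℂ, (Complex.cos z).re = Real.cos z.re * Real.cosh z.im := fun z => by
    rw [Complex.cos_eq]
    simp [← Complex.ofReal_cos, ← Complex.ofReal_cosh, ← Complex.ofReal_sin, ← Complex.ofReal_sinh]
  have hpointwise (θ : ℝ) :
      Real.exp |(circleEval θ A).im| ≤ 4 * (Complex.cos (circleEval θ A)).re := by
    have hcos : 1 / 2 ≤ Real.cos (circleEval θ A).re := by
      rw [← Real.cos_abs, ← Real.cos_pi_div_three]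
      exact Real.cos_le_cos_of_nonneg_of_le_pi (abs_nonneg _) (by linarith [Real.pi_pos])
        ((hA θ).trans (by linarith [Real.pi_gt_three]))
    have hcosh : Real.exp |(circleEval θ A).im| ≤ 2 * Real.cosh (circleEval θ A).im := by
      rw [← Real.cosh_abs, Real.cosh_eq]
      linarith [Real.exp_pos (-|(circleEval θ A).im|)]
    rw [hcos_re]
    nlinarith [Real.cosh_pos (circleEval θ A).im]
  calc ∫ θ in (0 : ℝ)..π, Real.exp |(circleEval θ A).im|
      ≤ ∫ θ in (0 : ℝ)..π, 4 * (Complex.cos (circleEval θ A)).re :=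
        intervalIntegral.integral_mono Real.pi_pos.le
          ((by fun_prop : Continuous _).intervalIntegrable _ _)
          ((by fun_prop : Continuous _).intervalIntegrable _ _) hpointwise
    _ = 4 * (π * Real.cos (A.coeff 0)) := by
        rw [intervalIntegral.integral_const_mul,
          integral_re_circleEval A Complex.differentiable_cos Complex.cos_conj,
          Complex.cos_ofReal_re]
    _ ≤ 4 * π := by nlinarith [Real.pi_pos, Real.cos_le_one (A.coeff 0)]

lemma circleEval_eq_X_mul_divX (θ : ℝ) :
    circleEval θ A = circleEval θ X * circleEval θ A.divX + A.coeff 0 := by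
  conv_lhs => rw [← divX_mul_X_add A]
  rw [map_add, map_mul, circleEval_C, mul_comm]

lemma exists_re_circleEval_eq_cos_mul : ∃ B : ℝ[X], ∀ θ,
    (circleEval θ B).re = Real.cos θ * (circleEval θ A).re := by
  refine ⟨(1 / 2 : ℝ) • (X * A + A.divX + C (A.coeff 0) * X), fun θ => ?_⟩
  have hA := circleEval_eq_X_mul_divX A θ
  have hre := congrArg Complex.re hA
  have him := congrArg Complex.im hA
  have hsq := Real.sin_sq_add_cos_sq θ
  simp only [Complex.add_re, Complex.add_im, Complex.mul_re, Complex.mul_im, Complex.ofReal_re,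
    Complex.ofReal_im, re_circleEval_X, im_circleEval_X] at hre him
  simp only [map_smul, map_add, map_mul, circleEval_C, Complex.smul_re, Complex.add_re,
    Complex.mul_re, Complex.ofReal_re, Complex.ofReal_im, re_circleEval_X, im_circleEval_X,
    smul_eq_mul]
  rw [hre, him]
  linear_combination (-(circleEval θ A.divX).re / 2) * hsq

lemma exists_im_circleEval_eq_cos_mul (hA : A.coeff 0 = 0) : ∃ B : ℝ[X], B.coeff 0 = 0 ∧
    ∀ θ, (circleEval θ B).im = Real.cos θ * (circleEval θ A).im := by
  refine ⟨(1 / 2 : ℝ) • (X * A + A.divX - C (A.coeff 1)), by simp [coeff_divX], fun θ => ?_⟩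
  have hA' := circleEval_eq_X_mul_divX A θ
  have hre := congrArg Complex.re hA'
  have him := congrArg Complex.im hA'
  have hsq := Real.sin_sq_add_cos_sq θ
  simp only [hA, Complex.ofReal_zero, add_zero, Complex.mul_re, Complex.mul_im, re_circleEval_X,
    im_circleEval_X] at hre him
  simp only [map_smul, map_add, map_sub, map_mul, circleEval_C, Complex.smul_im, Complex.add_im,
    Complex.sub_im, Complex.mul_im, Complex.ofReal_im, re_circleEval_X, im_circleEval_X,
    smul_eq_mul]
  rw [hre, him]
  linear_combination (-(circleEval θ A.divX).im / 2) * hsq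

lemma exists_re_circleEval_eq_eval_cos (p : ℝ[X]) :
    ∃ A : ℝ[X], ∀ θ, (circleEval θ A).re = p.eval (Real.cos θ) := by
  induction p using Polynomial.induction_on with
  | C a => exact ⟨C a, fun θ => by simp⟩
  | add p q hp hq =>
    obtain ⟨⟨A, hA⟩, B, hB⟩ := And.intro hp hq
    exact ⟨A + B, fun θ => by simp [hA, hB]⟩
  | monomial n a ih =>
    obtain ⟨A, hA⟩ := ih
    obtain ⟨B, hB⟩ := exists_re_circleEval_eq_cos_mul A
    exact ⟨B, fun θ => by rw [hB, hA, pow_succ, ← mul_assoc (C a), eval_mul_X, mul_comm]⟩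

lemma exists_im_circleEval_eq_sin_mul_eval_cos (p : ℝ[X]) : ∃ A : ℝ[X], A.coeff 0 = 0 ∧
    ∀ θ, (circleEval θ A).im = Real.sin θ * p.eval (Real.cos θ) := by
  induction p using Polynomial.induction_on with
  | C a => exact ⟨a • X, by simp, fun θ => by simp [mul_comm]⟩
  | add p q hp hq =>
    obtain ⟨⟨A, hA₀, hA⟩, B, hB₀, hB⟩ := And.intro hp hq
    exact ⟨A + B, by simp [hA₀, hB₀], fun θ => by simp [hA, hB, mul_add]⟩
  | monomial n a ih =>
    obtain ⟨A, hA₀, hA⟩ := ih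
    obtain ⟨B, hB₀, hB⟩ := exists_im_circleEval_eq_cos_mul A hA₀
    exact ⟨B, hB₀, fun θ => by rw [hB, hA, pow_succ, ← mul_assoc (C a), eval_mul_X]; ring⟩

end CircleEval

/-! ### Zygmund's inequality -/

/-- The gauge `Φ_K(y) = |y| log⁺(K|y|)`, `K > 0`, of the class `L log L`. -/
def zygmundGauge (K y : ℝ) : ℝ := |y| * Real.posLog (K * |y|)

section Gauge

lemma posLog_le_posLog {x y : ℝ} (hx : 0 ≤ x) (hxy : x ≤ y) : Real.posLog x ≤ Real.posLog y :=
  Real.monotoneOn_posLog (mem_Ici.2 hx) (mem_Ici.2 (hx.trans hxy)) hxy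

variable {K a b : ℝ}

lemma zygmundGauge_nonneg {y : ℝ} : 0 ≤ zygmundGauge K y :=
  mul_nonneg (abs_nonneg y) Real.posLog_nonneg

@[fun_prop]
lemma continuous_zygmundGauge (K : ℝ) : Continuous (zygmundGauge K) := by
  unfold zygmundGauge
  fun_prop

lemma zygmundGauge_mono (hK : 0 ≤ K) (hab : |a| ≤ |b|) : zygmundGauge K a ≤ zygmundGauge K b := by
  have hlog : Real.posLog (K * |a|) ≤ Real.posLog (K * |b|) :=
    posLog_le_posLog (by positivity) (mul_le_mul_of_nonneg_left hab hK)
  exact mul_le_mul hab hlog Real.posLog_nonneg (abs_nonneg b)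

lemma mul_le_exp_add_mul_posLog (ha : 0 ≤ a) (b : ℝ) : a * b ≤ Real.exp b + a * Real.posLog a := by
  rcases le_or_gt a 1 with ha1 | ha1
  · have hpos := mul_nonneg ha (Real.posLog_nonneg (x := a))
    rcases le_total 0 b with hb | hb
    · nlinarith [Real.add_one_le_exp b]
    · nlinarith [Real.exp_pos b]
  · have ha0 : 0 < a := by linarith
    have hexp := Real.add_one_le_exp (b - Real.log a)
    rw [Real.exp_sub, Real.exp_log ha0, le_div_iff₀ ha0] at hexp
    rw [Real.posLog_eq_log (by rw [abs_of_pos ha0]; exact ha1.le)]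
    nlinarith

lemma mul_le_exp_div_add_zygmundGauge (hK : 0 < K) (a b : ℝ) :
    a * b ≤ Real.exp |b| / K + zygmundGauge K a := by
  have hyoung := mul_le_exp_add_mul_posLog (a := K * |a|) (by positivity) |b|
  calc a * b ≤ |a| * |b| := (le_abs_self _).trans (abs_mul a b).le
    _ = K * |a| * |b| / K := by field_simp
    _ ≤ (Real.exp |b| + K * |a| * Real.posLog (K * |a|)) / K := by gcongr
    _ = Real.exp |b| / K + zygmundGauge K a := by rw [zygmundGauge]; field_simp

end Gauge

lemma exists_polynomial_near_sign {q : ℝ → ℝ} (hq : Continuous q) (a b : ℝ) {δ : ℝ} (hδ : 0 < δ)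
    (hδ1 : δ < 1) : ∃ p : ℝ[X], ∀ t ∈ Icc a b,
      |p.eval t| ≤ 1 ∧ (1 - 2 * δ) * |q t| - δ ≤ q t * p.eval t := by
  have hden : ∀ t, 0 < |q t| + δ := fun t => by positivity
  have hs : Continuous fun t => (1 - δ) * (q t / (|q t| + δ)) :=
    continuous_const.mul (hq.div (by fun_prop) fun t => (hden t).ne')
  obtain ⟨p, hp⟩ := exists_polynomial_near_of_continuousOn a b _ hs.continuousOn δ hδ
  refine ⟨p, fun t ht => ?_⟩
  have hnear := abs_le.1 (hp t ht).le
  set r := q t / (|q t| + δ) with hr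
  have hr1 : |r| ≤ 1 := by
    rw [hr, abs_div, abs_of_pos (hden t), div_le_one (hden t)]
    linarith
  have hqr : |q t| - δ ≤ q t * r := by
    rw [hr, ← mul_div_assoc, le_div_iff₀ (hden t)]
    nlinarith [abs_mul_abs_self (q t)]
  have herr : |q t * (p.eval t - (1 - δ) * r)| ≤ |q t| * δ := by
    rw [abs_mul]
    exact mul_le_mul_of_nonneg_left (abs_le.2 hnear) (abs_nonneg _)
  rw [abs_le] at hr1 herr ⊢
  exact ⟨⟨by nlinarith, by nlinarith⟩, by nlinarith [abs_nonneg (q t)]⟩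

section ZygmundInequality

variable {F A : ℝ[X]}

lemma exists_re_circleEval_near_sign (F : ℝ[X]) {δ : ℝ} (hδ : 0 < δ) (hδ1 : δ < 1) :
    ∃ A : ℝ[X], (∀ θ, |(circleEval θ A).re| ≤ 1) ∧ ∀ θ ∈ Icc 0 π,
      (1 - 2 * δ) * |(circleEval θ F).re| - δ ≤ (circleEval θ F).re * (circleEval θ A).re := by
  obtain ⟨p, hp⟩ := exists_polynomial_near_sign (q := fun t => (circleEval (Real.arccos t) F).re)
    ((continuous_re_circleEval F).comp Real.continuous_arccos) (-1) 1 hδ hδ1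
  obtain ⟨A, hA⟩ := exists_re_circleEval_eq_eval_cos p
  refine ⟨A, fun θ => hA θ ▸ (hp _ (Real.cos_mem_Icc θ)).1, fun θ hθ => ?_⟩
  have hsign := (hp _ (Real.cos_mem_Icc θ)).2
  rwa [Real.arccos_cos hθ.1 hθ.2, ← hA] at hsign

lemma integral_im_mul_im_circleEval_le (hA : ∀ θ, |(circleEval θ A).re| ≤ 1) {K : ℝ} (hK : 0 < K) :
    ∫ θ in (0 : ℝ)..π, (circleEval θ F).im * (circleEval θ A).im ≤
      4 * π / K + ∫ θ in (0 : ℝ)..π, zygmundGauge K (circleEval θ F).im := by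
  calc ∫ θ in (0 : ℝ)..π, (circleEval θ F).im * (circleEval θ A).im
      ≤ ∫ θ in (0 : ℝ)..π,
          (Real.exp |(circleEval θ A).im| / K + zygmundGauge K (circleEval θ F).im) :=
        intervalIntegral.integral_mono Real.pi_pos.le
          ((by fun_prop : Continuous _).intervalIntegrable _ _)
          ((by fun_prop : Continuous _).intervalIntegrable _ _)
          fun θ => mul_le_exp_div_add_zygmundGauge hK _ _
    _ = (∫ θ in (0 : ℝ)..π, Real.exp |(circleEval θ A).im|) / K +
          ∫ θ in (0 : ℝ)..π, zygmundGauge K (circleEval θ F).im := by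
        rw [intervalIntegral.integral_add ((by fun_prop : Continuous _).intervalIntegrable _ _)
          ((by fun_prop : Continuous _).intervalIntegrable _ _), intervalIntegral.integral_div]
    _ ≤ _ := by
        gcongr
        exact integral_exp_abs_im_circleEval_le hA

/-- Duality: test `Re F` against `Re A ≈ sign (Re F)` with `|Re A| ≤ 1`. Since `F A` vanishes at the
origin the pairing equals that of `Im F` with `Im A`, and `Im A` is exponentially integrable. -/
lemma integral_abs_re_circleEval_le (hF : F.coeff 0 = 0) {K : ℝ} (hK : 0 < K) :
    ∫ θ in (0 : ℝ)..π, |(circleEval θ F).re| ≤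
      4 * π / K + ∫ θ in (0 : ℝ)..π, zygmundGauge K (circleEval θ F).im := by
  set V := ∫ θ in (0 : ℝ)..π, |(circleEval θ F).re|
  have hlim : Tendsto (fun δ : ℝ => (1 - 2 * δ) * V - δ * π) (𝓝[>] 0) (𝓝 V) := by
    have hcont : Continuous fun δ : ℝ => (1 - 2 * δ) * V - δ * π := by fun_prop
    simpa using (hcont.tendsto 0).mono_left nhdsWithin_le_nhds
  refine le_of_tendsto hlim ?_
  filter_upwards [Ioo_mem_nhdsGT one_pos] with δ ⟨hδ, hδ1⟩
  obtain ⟨A, hA, hsign⟩ := exists_re_circleEval_near_sign F hδ hδ1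
  calc (1 - 2 * δ) * V - δ * π = ∫ θ in (0 : ℝ)..π, ((1 - 2 * δ) * |(circleEval θ F).re| - δ) := by
        rw [intervalIntegral.integral_sub ((by fun_prop : Continuous _).intervalIntegrable _ _)
          intervalIntegrable_const, intervalIntegral.integral_const_mul,
          intervalIntegral.integral_const, smul_eq_mul, sub_zero, mul_comm δ]
    _ ≤ ∫ θ in (0 : ℝ)..π, (circleEval θ F).re * (circleEval θ A).re :=
        intervalIntegral.integral_mono_on Real.pi_pos.le
          ((by fun_prop : Continuous _).intervalIntegrable _ _)
          ((by fun_prop : Continuous _).intervalIntegrable _ _) hsign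
    _ = ∫ θ in (0 : ℝ)..π, (circleEval θ F).im * (circleEval θ A).im :=
        (integral_im_mul_im_circleEval A F hF).symm
    _ ≤ _ := integral_im_mul_im_circleEval_le hA hK

end ZygmundInequality

/-! ### The substitution `t = cos θ` -/

instance : IsFiniteMeasure μI :=
  inferInstanceAs (IsFiniteMeasure (volume.restrict (Ioo (-1 : ℝ) 1)))

lemma ae_μI_mem_Ioo : ∀ᵐ t ∂μI, t ∈ Ioo (-1 : ℝ) 1 := ae_restrict_mem measurableSet_Ioo

lemma integrable_μI_of_continuous {E : Type*} [NormedAddCommGroup E] {f : ℝ → E}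
    (hf : Continuous f) : Integrable f μI :=
  (hf.continuousOn.integrableOn_compact isCompact_Icc).mono_set Ioo_subset_Icc_self

section CosSubstitution

variable {E : Type*} [NormedAddCommGroup E] [NormedSpace ℝ E] {f : ℝ → E}

lemma cos_image_Ioo : Real.cos '' Ioo 0 π = Ioo (-1) 1 := by
  refine Subset.antisymm ?_ fun t ht => ⟨Real.arccos t,
    ⟨Real.arccos_pos.2 ht.2, Real.arccos_lt_pi.2 ht.1⟩, Real.cos_arccos ht.1.le ht.2.le⟩
  rintro _ ⟨θ, hθ, rfl⟩
  exact ⟨Real.cos_pi ▸ Real.cos_lt_cos_of_nonneg_of_le_pi hθ.1.le le_rfl hθ.2,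
    Real.cos_zero ▸ Real.cos_lt_cos_of_nonneg_of_le_pi le_rfl hθ.2.le hθ.1⟩

lemma sin_pos_of_mem_Ioo {θ : ℝ} (hθ : θ ∈ Ioo 0 π) : 0 < Real.sin θ :=
  Real.sin_pos_of_pos_of_lt_pi hθ.1 hθ.2

lemma integral_μI (f : ℝ → E) :
    ∫ t, f t ∂μI = ∫ θ in (0 : ℝ)..π, Real.sin θ • f (Real.cos θ) := by
  rw [μI, ← cos_image_Ioo, integral_image_eq_integral_abs_deriv_smul measurableSet_Ioo
    (fun θ _ => (Real.hasDerivAt_cos θ).hasDerivWithinAt)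
    (Real.injOn_cos.mono Ioo_subset_Icc_self),
    intervalIntegral.integral_of_le Real.pi_pos.le, integral_Ioc_eq_integral_Ioo]
  refine setIntegral_congr_fun measurableSet_Ioo fun θ hθ => ?_
  simp only [abs_neg, abs_of_pos (sin_pos_of_mem_Ioo hθ)]

lemma integrable_μI_iff :
    Integrable f μI ↔ IntegrableOn (fun θ => Real.sin θ • f (Real.cos θ)) (Ioo 0 π) := by
  rw [μI, ← cos_image_Ioo, ← IntegrableOn,
    integrableOn_image_iff_integrableOn_abs_deriv_smul measurableSet_Ioo
      (fun θ _ => (Real.hasDerivAt_cos θ).hasDerivWithinAt)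
      (Real.injOn_cos.mono Ioo_subset_Icc_self)]
  refine integrableOn_congr_fun (fun θ hθ => ?_) measurableSet_Ioo
  simp only [abs_neg, abs_of_pos (sin_pos_of_mem_Ioo hθ)]

end CosSubstitution

/-- The function `t ↦ Re F(e^{iθ}) / √(1 - t²)`, `t = cos θ`, on `(-1, 1)`. -/
def cosDensity (F : ℝ[X]) (t : ℝ) : ℝ := (circleEval (Real.arccos t) F).re / √(1 - t ^ 2)

lemma cosDensity_sub (F G : ℝ[X]) (t : ℝ) :
    cosDensity (F - G) t = cosDensity F t - cosDensity G t := by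
  rw [cosDensity, map_sub, Complex.sub_re, sub_div, cosDensity, cosDensity]

lemma sin_mul_cosDensity_cos (F : ℝ[X]) {θ : ℝ} (hθ : θ ∈ Ioo 0 π) :
    Real.sin θ * cosDensity F (Real.cos θ) = (circleEval θ F).re := by
  have hsin := sin_pos_of_mem_Ioo hθ
  rw [cosDensity, Real.arccos_cos hθ.1.le hθ.2.le, ← Real.sin_sq, Real.sqrt_sq hsin.le,
    mul_div_cancel₀ _ hsin.ne']

lemma integrable_cosDensity (F : ℝ[X]) : Integrable (cosDensity F) μI :=
  integrable_μI_iff.2 <| ((continuous_re_circleEval F).continuousOn.integrableOn_compact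
    isCompact_Icc |>.mono_set Ioo_subset_Icc_self).congr_fun
    (fun _ hθ => (sin_mul_cosDensity_cos F hθ).symm) measurableSet_Ioo

section CosDensity

variable {F p : ℝ[X]}

lemma integral_cosDensity_mul_cos (hF : F.coeff 0 = 0)
    (hFp : ∀ θ, (circleEval θ F).im = Real.sin θ * p.eval (Real.cos θ)) (n : ℕ) :
    ∫ t, cosDensity F t * Real.cos (n * Real.arccos t) ∂μI =
      ∫ t, p.eval t * Real.sin (n * Real.arccos t) ∂μI := by
  rw [integral_μI, integral_μI]
  calc _ = ∫ θ in (0 : ℝ)..π, (circleEval θ F).re * (circleEval θ (X ^ n)).re :=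
        intervalIntegral.integral_congr_Ioo_of_le Real.pi_pos.le fun θ hθ => by
          rw [smul_eq_mul, ← mul_assoc, sin_mul_cosDensity_cos F hθ,
            Real.arccos_cos hθ.1.le hθ.2.le, re_circleEval_X_pow]
    _ = ∫ θ in (0 : ℝ)..π, (circleEval θ F).im * (circleEval θ (X ^ n)).im :=
        (integral_im_mul_im_circleEval _ F hF).symm
    _ = _ := intervalIntegral.integral_congr_Ioo_of_le Real.pi_pos.le fun θ hθ => by
          rw [smul_eq_mul, ← mul_assoc, ← hFp, Real.arccos_cos hθ.1.le hθ.2.le,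
            im_circleEval_X_pow]

lemma integral_abs_cosDensity_le (hF : F.coeff 0 = 0)
    (hFp : ∀ θ, (circleEval θ F).im = Real.sin θ * p.eval (Real.cos θ)) {K : ℝ} (hK : 0 < K) :
    ∫ t, |cosDensity F t| ∂μI ≤ 4 * π / K + ∫ t, zygmundGauge K (p.eval t) ∂μI := by
  have hgauge : ∀ θ ∈ Ioo 0 π, zygmundGauge K (circleEval θ F).im ≤
      Real.sin θ • zygmundGauge K (p.eval (Real.cos θ)) := fun θ hθ => by
    have hsin := sin_pos_of_mem_Ioo hθ
    rw [hFp, zygmundGauge, zygmundGauge, abs_mul, abs_of_pos hsin, smul_eq_mul, mul_assoc]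
    gcongr ?_ * (?_ * ?_)
    refine posLog_le_posLog (by positivity) ?_
    gcongr
    exact mul_le_of_le_one_left (abs_nonneg _) (Real.sin_le_one θ)
  rw [integral_μI, integral_μI]
  calc _ = ∫ θ in (0 : ℝ)..π, |(circleEval θ F).re| :=
        intervalIntegral.integral_congr_Ioo_of_le Real.pi_pos.le fun θ hθ => by
          rw [smul_eq_mul, ← sin_mul_cosDensity_cos F hθ, abs_mul,
            abs_of_pos (sin_pos_of_mem_Ioo hθ)]
    _ ≤ 4 * π / K + ∫ θ in (0 : ℝ)..π, zygmundGauge K (circleEval θ F).im :=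
        integral_abs_re_circleEval_le hF hK
    _ ≤ _ := by
        gcongr
        exact intervalIntegral.integral_mono_on_of_le_Ioo Real.pi_pos.le
          ((by fun_prop : Continuous _).intervalIntegrable _ _)
          ((by fun_prop : Continuous _).intervalIntegrable _ _) hgauge

end CosDensity

/-! ### The class `L log L` -/

section Gauge

variable {K L : ℝ}

lemma zygmundGauge_mono_left (hK : 0 ≤ K) (hKL : K ≤ L) (y : ℝ) :
    zygmundGauge K y ≤ zygmundGauge L y := by
  refine mul_le_mul_of_nonneg_left (posLog_le_posLog (by positivity) ?_) (abs_nonneg y)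
  gcongr

lemma zygmundGauge_add_le (hK : 0 ≤ K) (a b : ℝ) :
    zygmundGauge K (a + b) ≤ 2 * zygmundGauge (2 * K) a + 2 * zygmundGauge (2 * K) b := by
  have hdouble : ∀ c, zygmundGauge K (2 * c) = 2 * zygmundGauge (2 * K) c := fun c => by
    rw [zygmundGauge, zygmundGauge, abs_mul, abs_two, mul_left_comm K, mul_assoc, mul_assoc]
  have ha : 0 ≤ zygmundGauge (2 * K) a := zygmundGauge_nonneg
  have hb : 0 ≤ zygmundGauge (2 * K) b := zygmundGauge_nonneg
  have hab := abs_add_le a b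
  rcases le_total |a| |b| with h | h
  · have := zygmundGauge_mono hK (a := a + b) (b := 2 * b) (by rw [abs_mul, abs_two]; linarith)
    linarith [hdouble b]
  · have := zygmundGauge_mono hK (a := a + b) (b := 2 * a) (by rw [abs_mul, abs_two]; linarith)
    linarith [hdouble a]

lemma abs_le_add_zygmundGauge (hK : 0 < K) (y : ℝ) : |y| ≤ 3 / K + zygmundGauge K y := by
  rcases le_total (K * |y|) 3 with h | h
  · exact le_add_of_le_of_nonneg ((le_div_iff₀' hK).2 h) zygmundGauge_nonneg
  · have hlog : 1 ≤ Real.posLog (K * |y|) := by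
      rw [Real.posLog_apply]
      refine le_max_of_le_right ((Real.le_log_iff_exp_le (by linarith)).2 ?_)
      linarith [Real.exp_one_lt_d9]
    exact le_add_of_nonneg_of_le (by positivity) (le_mul_of_one_le_right (abs_nonneg y) hlog)

lemma zygmundGauge_le_mul_sq (hK : 0 ≤ K) (y : ℝ) : zygmundGauge K y ≤ K * y ^ 2 := by
  have hlog : Real.posLog (K * |y|) ≤ K * |y| := by
    rw [Real.posLog_apply]
    exact max_le (by positivity) (Real.log_le_self (by positivity))
  calc zygmundGauge K y ≤ |y| * (K * |y|) := mul_le_mul_of_nonneg_left hlog (abs_nonneg y)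
    _ = K * y ^ 2 := by rw [← sq_abs]; ring

lemma zygmundGauge_le_add (K y : ℝ) :
    zygmundGauge K y ≤ Real.posLog K * |y| + zygmundGauge 1 y := by
  calc zygmundGauge K y ≤ |y| * (Real.posLog K + Real.posLog |y|) :=
        mul_le_mul_of_nonneg_left Real.posLog_mul (abs_nonneg y)
    _ = Real.posLog K * |y| + zygmundGauge 1 y := by rw [zygmundGauge, one_mul]; ring

end Gauge

/-- The class `L log L` of real functions on a general measure space. -/
structure MemZygmundClass {α : Type*} [MeasurableSpace α] (g : α → ℝ) (μ : Measure α) : Prop where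
  aestronglyMeasurable : AEStronglyMeasurable g μ
  integrable_zygmundGauge_one : Integrable (fun t => zygmundGauge 1 (g t)) μ

namespace MemZygmundClass

variable {α : Type*} [MeasurableSpace α] {μ : Measure α} {f g : α → ℝ}

lemma of_le {u : α → ℝ} (hg : AEStronglyMeasurable g μ) (hu : Integrable u μ)
    (hle : ∀ t, zygmundGauge 1 (g t) ≤ u t) : MemZygmundClass g μ :=
  ⟨hg, hu.mono' ((continuous_zygmundGauge 1).comp_aestronglyMeasurable hg) (.of_forall fun t => by
    rw [Real.norm_of_nonneg zygmundGauge_nonneg]; exact hle t)⟩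

lemma of_memLp_two (hf : MemLp f 2 μ) : MemZygmundClass f μ :=
  of_le hf.1 hf.integrable_sq fun t => by simpa using zygmundGauge_le_mul_sq zero_le_one (f t)

lemma neg (hg : MemZygmundClass g μ) : MemZygmundClass (fun t => -g t) μ :=
  of_le hg.1.neg hg.2 fun t => by simp only [zygmundGauge, abs_neg, le_refl]

variable [IsFiniteMeasure μ]

lemma integrable (hg : MemZygmundClass g μ) : Integrable g μ := by
  refine ((integrable_const (3 / 1)).add hg.2).mono' hg.1 (.of_forall fun t => ?_)
  exact abs_le_add_zygmundGauge one_pos (g t)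

lemma integrable_zygmundGauge (hg : MemZygmundClass g μ) (K : ℝ) :
    Integrable (fun t => zygmundGauge K (g t)) μ := by
  refine ((hg.integrable.abs.const_mul (Real.posLog K)).add hg.2).mono'
    ((continuous_zygmundGauge K).comp_aestronglyMeasurable hg.1) (.of_forall fun t => ?_)
  rw [Real.norm_of_nonneg zygmundGauge_nonneg]
  exact zygmundGauge_le_add K (g t)

lemma sub (hf : MemZygmundClass f μ) (hg : MemZygmundClass g μ) :
    MemZygmundClass (fun t => f t - g t) μ :=
  of_le (hf.1.sub hg.1) (((hf.integrable_zygmundGauge _).const_mul 2).add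
    ((hg.neg.integrable_zygmundGauge _).const_mul 2)) fun t => by
      rw [sub_eq_add_neg]; exact zygmundGauge_add_le zero_le_one (f t) (-g t)

lemma exists_memLp_two_integral_zygmundGauge_sub_lt (hg : MemZygmundClass g μ) {K η : ℝ}
    (hK : 0 ≤ K) (hη : 0 < η) : ∃ f : α → ℝ, MemLp f 2 μ ∧
      ∫ t, zygmundGauge K (g t - f t) ∂μ < η := by
  let trunc (M : ℕ) (y : ℝ) : ℝ := if |y| ≤ M then y else 0
  have hmeas (M) : AEStronglyMeasurable (fun t => trunc M (g t)) μ :=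
    (((Measurable.ite (measurableSet_le measurable_norm measurable_const) measurable_id
      measurable_const : Measurable (trunc M))).comp_aemeasurable
        hg.1.aemeasurable).aestronglyMeasurable
  have hbdd (M y) : |trunc M y| ≤ M := by
    simp only [trunc]; split_ifs with h <;> simp [h]
  have hres (M y) : |y - trunc M y| ≤ |y| := by
    simp only [trunc]; split_ifs <;> simp
  have hlim : Tendsto (fun M => ∫ t, zygmundGauge K (g t - trunc M (g t)) ∂μ) atTop
      (𝓝 (∫ _, (0 : ℝ) ∂μ)) := by
    refine tendsto_integral_of_dominated_convergence _ (fun M =>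
      (continuous_zygmundGauge K).comp_aestronglyMeasurable (hg.1.sub (hmeas M)))
      (hg.integrable_zygmundGauge K) (fun M => .of_forall fun t => ?_) (.of_forall fun t => ?_)
    · rw [Real.norm_of_nonneg zygmundGauge_nonneg]
      exact zygmundGauge_mono hK (hres M (g t))
    · obtain ⟨N, hN⟩ := exists_nat_ge |g t|
      refine tendsto_const_nhds.congr' ?_
      filter_upwards [eventually_ge_atTop N] with M hM
      have hgM : |g t| ≤ M := hN.trans (by exact_mod_cast hM)
      simp [trunc, hgM, zygmundGauge]
  rw [integral_zero] at hlim
  obtain ⟨M, hM⟩ := (hlim.eventually_lt_const hη).exists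
  exact ⟨_, MemLp.of_bound (hmeas M) M (.of_forall fun t => hbdd M (g t)), hM⟩

end MemZygmundClass

section PolynomialDensity

variable {μ : Measure ℝ} [IsFiniteMeasure μ] {a b : ℝ} {g : ℝ → ℝ}

lemma memLp_two_eval (hμ : ∀ᵐ t ∂μ, t ∈ Icc a b) (p : ℝ[X]) : MemLp (fun t => p.eval t) 2 μ := by
  obtain ⟨M, hM⟩ := isCompact_Icc.exists_bound_of_continuousOn (p.continuousOn (s := Icc a b))
  exact MemLp.of_bound p.continuous.aestronglyMeasurable M (hμ.mono hM)

lemma exists_polynomial_integral_sq_sub_le (hμ : ∀ᵐ t ∂μ, t ∈ Icc a b) (hg : MemLp g 2 μ) {η : ℝ}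
    (hη : 0 < η) : ∃ p : ℝ[X], ∫ t, (g t - p.eval t) ^ 2 ∂μ ≤ η := by
  have hg' : MemLp g (ENNReal.ofReal 2) μ := by simpa using hg
  obtain ⟨c, hc, hc2⟩ := hg'.exists_boundedContinuous_integral_rpow_sub_le two_pos
    (by positivity : 0 < η / 4)
  simp only [ENNReal.ofReal_ofNat, Real.norm_eq_abs, Real.rpow_two, sq_abs] at hc hc2
  set δ := min 1 (η / (4 * (μ.real univ + 1)))
  have hδ0 : 0 < δ := by positivity
  obtain ⟨p, hp⟩ := exists_polynomial_near_of_continuousOn a b c c.continuous.continuousOn δ hδ0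
  have hcg : Integrable (fun t => (g t - c t) ^ 2) μ := (hg.sub hc2).integrable_sq
  have hle : ∀ᵐ t ∂μ, (g t - p.eval t) ^ 2 ≤ 2 * (g t - c t) ^ 2 + 2 * δ := by
    filter_upwards [hμ] with t ht
    have hpc := abs_lt.1 (hp t ht)
    have hpc2 : (p.eval t - c t) ^ 2 ≤ δ := by
      nlinarith [min_le_left 1 (η / (4 * (μ.real univ + 1)))]
    nlinarith [sq_nonneg ((g t - c t) + (p.eval t - c t))]
  have hδμ : δ * μ.real univ ≤ η / 4 := by
    calc δ * μ.real univ ≤ η / (4 * (μ.real univ + 1)) * (μ.real univ + 1) := by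
          gcongr
          · exact min_le_right _ _
          · linarith
      _ = η / 4 := by field_simp
  refine ⟨p, ?_⟩
  calc ∫ t, (g t - p.eval t) ^ 2 ∂μ ≤ ∫ t, (2 * (g t - c t) ^ 2 + 2 * δ) ∂μ :=
        integral_mono_ae (hg.sub (memLp_two_eval hμ p)).integrable_sq
          ((hcg.const_mul 2).add (integrable_const _)) hle
    _ = 2 * ∫ t, (g t - c t) ^ 2 ∂μ + 2 * (δ * μ.real univ) := by
        rw [integral_add (hcg.const_mul 2) (integrable_const _), integral_const_mul,
          integral_const, smul_eq_mul]
        ring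
    _ ≤ η := by linarith

lemma MemZygmundClass.exists_polynomial_integral_zygmundGauge_sub_le (hμ : ∀ᵐ t ∂μ, t ∈ Icc a b)
    (hg : MemZygmundClass g μ) {K η : ℝ} (hK : 0 < K) (hη : 0 < η) :
    ∃ p : ℝ[X], ∫ t, zygmundGauge K (g t - p.eval t) ∂μ ≤ η := by
  obtain ⟨f, hf, hgf⟩ := hg.exists_memLp_two_integral_zygmundGauge_sub_lt (K := 2 * K)
    (by positivity) (by positivity : 0 < η / 4)
  obtain ⟨p, hp⟩ := exists_polynomial_integral_sq_sub_le hμ hf (by positivity : 0 < η / (8 * K))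
  have hgf_int := (hg.sub (of_memLp_two hf)).integrable_zygmundGauge (2 * K)
  have hfp_int : Integrable (fun t => (f t - p.eval t) ^ 2) μ :=
    (hf.sub (memLp_two_eval hμ p)).integrable_sq
  have hle : ∀ t, zygmundGauge K (g t - p.eval t) ≤
      2 * zygmundGauge (2 * K) (g t - f t) + 4 * K * (f t - p.eval t) ^ 2 := fun t => by
    have hadd := zygmundGauge_add_le hK.le (g t - f t) (f t - p.eval t)
    rw [sub_add_sub_cancel] at hadd
    linarith [zygmundGauge_le_mul_sq (by positivity : 0 ≤ 2 * K) (f t - p.eval t)]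
  refine ⟨p, ?_⟩
  calc ∫ t, zygmundGauge K (g t - p.eval t) ∂μ
      ≤ ∫ t, (2 * zygmundGauge (2 * K) (g t - f t) + 4 * K * (f t - p.eval t) ^ 2) ∂μ :=
        integral_mono ((hg.sub (of_memLp_two (memLp_two_eval hμ p))).integrable_zygmundGauge K)
          ((hgf_int.const_mul 2).add (hfp_int.const_mul _)) hle
    _ = 2 * ∫ t, zygmundGauge (2 * K) (g t - f t) ∂μ + 4 * K * ∫ t, (f t - p.eval t) ^ 2 ∂μ := by
        rw [integral_add (hgf_int.const_mul 2) (hfp_int.const_mul _), integral_const_mul,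
          integral_const_mul]
    _ ≤ 2 * (η / 4) + 4 * K * (η / (8 * K)) := by gcongr
    _ = η := by field_simp; norm_num

lemma MemZygmundClass.exists_polynomial_tendsto (hμ : ∀ᵐ t ∂μ, t ∈ Icc a b)
    (hg : MemZygmundClass g μ) : ∃ p : ℕ → ℝ[X], ∀ K, 0 < K →
      Tendsto (fun n => ∫ t, zygmundGauge K (g t - (p n).eval t) ∂μ) atTop (𝓝 0) := by
  choose p hp using fun n : ℕ => hg.exists_polynomial_integral_zygmundGauge_sub_le hμ
    (K := (n : ℝ) + 1) (η := 1 / ((n : ℝ) + 1)) (by positivity) (by positivity)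
  refine ⟨p, fun K hK => squeeze_zero' (.of_forall fun n =>
    integral_nonneg fun t => zygmundGauge_nonneg) ?_ tendsto_one_div_add_atTop_nhds_zero_nat⟩
  obtain ⟨N, hN⟩ := exists_nat_ge K
  filter_upwards [eventually_ge_atTop N] with n hn
  have hKn : K ≤ n + 1 := hN.trans (by exact_mod_cast hn.trans n.le_succ)
  have hgp := hg.sub (of_memLp_two (memLp_two_eval hμ (p n)))
  exact (integral_mono (hgp.integrable_zygmundGauge _) (hgp.integrable_zygmundGauge _)
    fun t => zygmundGauge_mono_left hK.le hKn _).trans (hp n)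

end PolynomialDensity

lemma tendsto_integral_abs_of_zygmundGauge {α : Type*} [MeasurableSpace α] {μ : Measure α}
    [IsFiniteMeasure μ] {u : ℕ → α → ℝ} (hu : ∀ n, MemZygmundClass (u n) μ)
    (hlim : ∀ K, 0 < K → Tendsto (fun n => ∫ t, zygmundGauge K (u n t) ∂μ) atTop (𝓝 0)) :
    Tendsto (fun n => ∫ t, |u n t| ∂μ) atTop (𝓝 0) := by
  refine tendsto_order.2 ⟨fun ε hε => .of_forall fun n => hε.trans_le
    (integral_nonneg fun t => abs_nonneg _), fun ε hε => ?_⟩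
  set K := 6 * (μ.real univ + 1) / ε with hK
  have hK0 : 0 < K := by positivity
  filter_upwards [(hlim K hK0).eventually_lt_const (half_pos hε)] with n hn
  have hconst : μ.real univ * (3 / K) < ε / 2 := by
    rw [hK, ← mul_div_assoc, div_lt_div_iff₀ (by positivity) two_pos]
    field_simp
    linarith
  calc ∫ t, |u n t| ∂μ ≤ ∫ t, (3 / K + zygmundGauge K (u n t)) ∂μ :=
        integral_mono (hu n).integrable.abs
          ((integrable_const _).add ((hu n).integrable_zygmundGauge K))
          fun t => abs_le_add_zygmundGauge hK0 _
    _ = μ.real univ * (3 / K) + ∫ t, zygmundGauge K (u n t) ∂μ := by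
        rw [integral_add (integrable_const _) ((hu n).integrable_zygmundGauge K), integral_const,
          smul_eq_mul]
    _ < ε := by linarith

/-! ### The Chebyshev conjugate function -/

section LOneLimits

variable {α : Type*} [MeasurableSpace α] {μ : Measure α}

lemma exists_tendsto_integral_norm_sub {E : Type*} [NormedAddCommGroup E] [CompleteSpace E]
    {f : ℕ → α → E} (hf : ∀ n, Integrable (f n) μ)
    (hcauchy : ∀ ε > 0, ∃ N, ∀ n ≥ N, ∀ m ≥ N, ∫ t, ‖f n t - f m t‖ ∂μ < ε) :
    ∃ h, Integrable h μ ∧ Tendsto (fun n => ∫ t, ‖f n t - h t‖ ∂μ) atTop (𝓝 0) := by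
  have hdist (n m) : dist ((hf n).toL1 (f n)) ((hf m).toL1 (f m)) = ∫ t, ‖f n t - f m t‖ ∂μ := by
    rw [dist_eq_norm, ← Integrable.toL1_sub, L1.norm_of_fun_eq_integral_norm]
    rfl
  obtain ⟨U, hU⟩ := cauchySeq_tendsto_of_complete (u := fun n => (hf n).toL1 (f n))
    (Metric.cauchySeq_iff.2 fun ε hε => by simpa only [hdist] using hcauchy ε hε)
  refine ⟨U, L1.integrable_coeFn U, (tendsto_iff_norm_sub_tendsto_zero.1 hU).congr fun n => ?_⟩
  rw [L1.norm_eq_integral_norm]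
  refine integral_congr_ae ?_
  filter_upwards [Lp.coeFn_sub ((hf n).toL1 (f n)) U, (hf n).coeFn_toL1] with t hsub hfn
  rw [hsub, Pi.sub_apply, hfn]

lemma tendsto_integral_mul_of_tendsto_integral_abs_sub {f : ℕ → α → ℝ} {h c : α → ℝ}
    (hf : ∀ n, Integrable (f n) μ) (hh : Integrable h μ) (hc : AEStronglyMeasurable c μ)
    (hc1 : ∀ t, |c t| ≤ 1) (hlim : Tendsto (fun n => ∫ t, |f n t - h t| ∂μ) atTop (𝓝 0)) :
    Tendsto (fun n => ∫ t, c t * f n t ∂μ) atTop (𝓝 (∫ t, c t * h t ∂μ)) := by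
  have hbdd {u : α → ℝ} (hu : Integrable u μ) : Integrable (fun t => c t * u t) μ :=
    hu.bdd_mul hc (.of_forall hc1)
  refine tendsto_iff_norm_sub_tendsto_zero.2
    (squeeze_zero (fun n => norm_nonneg _) (fun n => ?_) hlim)
  rw [← integral_sub (hbdd (hf n)) (hbdd hh)]
  refine norm_integral_le_of_norm_le ((hf n).sub hh).abs (.of_forall fun t => ?_)
  rw [← mul_sub, Real.norm_eq_abs, abs_mul]
  exact mul_le_of_le_one_left (abs_nonneg _) (hc1 t)

end LOneLimits

/-- With `t = cos θ`, the odd function with sine coefficients those of `√(1 - t²) g(t)` is conjugate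
to the even function with cosine coefficients those of `√(1 - t²) h(t)`. -/
def IsChebyshevConjugate {E : Type*} [NormedAddCommGroup E] [NormedSpace ℝ E] (g h : ℝ → E) :
    Prop :=
  ∀ n : ℕ, ∫ t, Real.cos (n * Real.arccos t) • h t ∂μI = ∫ t, Real.sin (n * Real.arccos t) • g t ∂μI

lemma ae_μI_mem_Icc : ∀ᵐ t ∂μI, t ∈ Icc (-1 : ℝ) 1 :=
  ae_μI_mem_Ioo.mono fun _ ht => Ioo_subset_Icc_self ht

section RealConjugate

variable {g h : ℝ → ℝ} {F : ℕ → ℝ[X]} {p : ℕ → ℝ[X]}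

lemma MemZygmundClass.sub_polynomial (hg : MemZygmundClass g μI) (q : ℝ[X]) :
    MemZygmundClass (fun t => g t - q.eval t) μI :=
  hg.sub (of_memLp_two (memLp_two_eval ae_μI_mem_Icc q))

lemma integral_zygmundGauge_polynomial_sub_le (hg : MemZygmundClass g μI) (q r : ℝ[X]) {K : ℝ}
    (hK : 0 ≤ K) : ∫ t, zygmundGauge K ((q - r).eval t) ∂μI ≤
      2 * ∫ t, zygmundGauge (2 * K) (g t - q.eval t) ∂μI +
        2 * ∫ t, zygmundGauge (2 * K) (g t - r.eval t) ∂μI := by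
  have hint (s : ℝ[X]) := ((hg.sub_polynomial s).integrable_zygmundGauge (2 * K)).const_mul 2
  rw [← integral_const_mul, ← integral_const_mul, ← integral_add (hint q) (hint r)]
  refine integral_mono (integrable_μI_of_continuous (by fun_prop)) ((hint q).add (hint r))
    fun t => ?_
  have hadd := zygmundGauge_add_le hK (-(g t - q.eval t)) (g t - r.eval t)
  rw [neg_sub, sub_add_sub_cancel, ← eval_sub] at hadd
  simpa only [zygmundGauge, abs_sub_comm] using hadd

lemma exists_integral_abs_cosDensity_sub_lt (hg : MemZygmundClass g μI)
    (hp : ∀ K, 0 < K → Tendsto (fun n => ∫ t, zygmundGauge K (g t - (p n).eval t) ∂μI) atTop (𝓝 0))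
    (hF : ∀ n, (F n).coeff 0 = 0)
    (hFp : ∀ n θ, (circleEval θ (F n)).im = Real.sin θ * (p n).eval (Real.cos θ))
    {ε : ℝ} (hε : 0 < ε) :
    ∃ N, ∀ n ≥ N, ∀ m ≥ N, ∫ t, ‖cosDensity (F n) t - cosDensity (F m) t‖ ∂μI < ε := by
  set K := 8 * π / ε
  have hK : 0 < K := by positivity
  obtain ⟨N, hN⟩ := eventually_atTop.1
    ((hp (2 * K) (by positivity)).eventually_lt_const (by positivity : 0 < ε / 8))
  refine ⟨N, fun n hn m hm => ?_⟩
  have hzygmund := integral_abs_cosDensity_le (F := F n - F m) (p := p n - p m) (by simp [hF])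
    (fun θ => by rw [map_sub, Complex.sub_im, hFp, hFp, eval_sub, mul_sub]) hK
  have hgauge := integral_zygmundGauge_polynomial_sub_le hg (p n) (p m) hK.le
  have hKε : 4 * π / K = ε / 2 := by simp only [K]; field_simp; norm_num
  simp only [cosDensity_sub] at hzygmund
  simp only [Real.norm_eq_abs]
  linarith [hN n hn, hN m hm]

lemma MemZygmundClass.exists_isChebyshevConjugate (hg : MemZygmundClass g μI) :
    ∃ h, Integrable h μI ∧ IsChebyshevConjugate g h := by
  obtain ⟨p, hp⟩ := hg.exists_polynomial_tendsto ae_μI_mem_Icc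
  choose F hF hFp using fun n => exists_im_circleEval_eq_sin_mul_eval_cos (p n)
  have hFint (n) := integrable_cosDensity (F n)
  have hpint (n) : Integrable (fun t => (p n).eval t) μI :=
    integrable_μI_of_continuous (p n).continuous
  obtain ⟨h, hh, hFh⟩ := exists_tendsto_integral_norm_sub hFint fun ε hε =>
    exists_integral_abs_cosDensity_sub_lt hg hp hF hFp hε
  have hpg : Tendsto (fun n => ∫ t, |(p n).eval t - g t| ∂μI) atTop (𝓝 0) := by
    simpa only [abs_sub_comm] using
      tendsto_integral_abs_of_zygmundGauge (fun n => hg.sub_polynomial (p n)) hp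
  have := Real.continuous_arccos
  refine ⟨h, hh, fun n => ?_⟩
  have hcos := tendsto_integral_mul_of_tendsto_integral_abs_sub hFint hh
    (c := fun t => Real.cos (n * Real.arccos t)) (Continuous.aestronglyMeasurable (by fun_prop))
    (fun t => Real.abs_cos_le_one _) hFh
  have hsin := tendsto_integral_mul_of_tendsto_integral_abs_sub hpint hg.integrable
    (c := fun t => Real.sin (n * Real.arccos t)) (Continuous.aestronglyMeasurable (by fun_prop))
    (fun t => Real.abs_sin_le_one _) hpg
  refine tendsto_nhds_unique hcos (hsin.congr fun k => ?_)
  simpa only [mul_comm] using (integral_cosDensity_mul_cos (hF k) (hFp k) n).symm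

end RealConjugate

lemma integrable_bounded_smul {E : Type*} [NormedAddCommGroup E] [NormedSpace ℝ E]
    {μ : Measure ℝ} {f : ℝ → E} {φ : ℝ → ℝ} (hf : Integrable f μ) (hφ : Continuous φ)
    (hφ1 : ∀ t, |φ t| ≤ 1) : Integrable (fun t => φ t • f t) μ :=
  hf.bdd_smul 1 hφ.aestronglyMeasurable (.of_forall hφ1)

section ComplexConjugate

variable {g : ℝ → ℂ}

lemma _root_.MemLlogL.memZygmundClass (hg : MemLlogL g) {ℓ : ℂ → ℝ} (hℓ : Continuous ℓ)
    (hle : ∀ z, |ℓ z| ≤ ‖z‖) : MemZygmundClass (fun t => ℓ (g t)) μI :=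
  .of_le (hℓ.comp_aestronglyMeasurable hg.1) hg.2 fun t => by
    have hlog : Real.posLog |ℓ (g t)| ≤ max (Real.log ‖g t‖) 0 := by
      rw [max_comm, ← Real.posLog_apply]
      exact posLog_le_posLog (abs_nonneg _) (hle _)
    rw [zygmundGauge, one_mul]
    exact mul_le_mul (hle _) hlog Real.posLog_nonneg (norm_nonneg _)

lemma _root_.MemLlogL.integrable (hg : MemLlogL g) : Integrable g μI :=
  Integrable.re_im_iff.1
    ⟨(hg.memZygmundClass Complex.continuous_re Complex.abs_re_le_norm).integrable,
      (hg.memZygmundClass Complex.continuous_im Complex.abs_im_le_norm).integrable⟩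

lemma _root_.MemLlogL.exists_isChebyshevConjugate (hg : MemLlogL g) :
    ∃ h, Integrable h μI ∧ IsChebyshevConjugate g h := by
  obtain ⟨u, hu, hgu⟩ :=
    (hg.memZygmundClass Complex.continuous_re Complex.abs_re_le_norm).exists_isChebyshevConjugate
  obtain ⟨v, hv, hgv⟩ :=
    (hg.memZygmundClass Complex.continuous_im Complex.abs_im_le_norm).exists_isChebyshevConjugate
  have hh : Integrable (fun t => (u t : ℂ) + v t * Complex.I) μI :=
    hu.ofReal.add (hv.ofReal.mul_const _)
  have := Real.continuous_arccos
  refine ⟨_, hh, fun n => ?_⟩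
  have hcos := integrable_bounded_smul hh (φ := fun t => Real.cos (n * Real.arccos t))
    (by fun_prop) fun t => Real.abs_cos_le_one _
  have hsin := integrable_bounded_smul hg.integrable (φ := fun t => Real.sin (n * Real.arccos t))
    (by fun_prop) fun t => Real.abs_sin_le_one _
  rw [← integral_re_add_im hcos, ← integral_re_add_im hsin]
  simpa [-Complex.real_smul, Complex.smul_re, Complex.smul_im] using
    congrArg₂ (fun a b : ℝ => (a : ℂ) + b * Complex.I) (hgu n) (hgv n)

end ComplexConjugate

/-! ### The Cauchy transform of a conjugate pair -/

section GeometricSeries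

variable {z : ℂ}

lemma one_sub_mul_exp_ne_zero (hz : ‖z‖ < 1) (θ : ℝ) : 1 - z * Complex.exp (θ * Complex.I) ≠ 0 := by
  intro h
  have hnorm := congrArg norm (sub_eq_zero.1 h)
  rw [norm_one, norm_mul, Complex.norm_exp_ofReal_mul_I, mul_one] at hnorm
  exact hz.ne' hnorm

lemma one_sub_mul_exp_mul_one_sub_mul_exp_neg (z : ℂ) (θ : ℝ) :
    (1 - z * Complex.exp (θ * Complex.I)) * (1 - z * Complex.exp ((-θ : ℝ) * Complex.I)) =
      1 - 2 * z * Real.cos θ + z ^ 2 := by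
  rw [Complex.exp_mul_I, Complex.exp_mul_I, Complex.ofReal_neg, Complex.cos_neg, Complex.sin_neg,
    Complex.ofReal_cos]
  linear_combination z ^ 2 * Complex.cos_sq_add_sin_sq θ - z ^ 2 * Complex.sin θ ^ 2 * Complex.I_sq

lemma one_sub_two_mul_cos_add_sq_ne_zero (hz : ‖z‖ < 1) (θ : ℝ) :
    1 - 2 * z * Real.cos θ + z ^ 2 ≠ 0 := by
  rw [← one_sub_mul_exp_mul_one_sub_mul_exp_neg]
  exact mul_ne_zero (one_sub_mul_exp_ne_zero hz θ) (one_sub_mul_exp_ne_zero hz (-θ))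

lemma hasSum_pow_mul_exp (hz : ‖z‖ < 1) (θ : ℝ) :
    HasSum (fun n : ℕ => z ^ n * Complex.exp ((n * θ : ℝ) * Complex.I))
      ((1 - z * Complex.exp ((-θ : ℝ) * Complex.I)) / (1 - 2 * z * Real.cos θ + z ^ 2)) := by
  have hsum := hasSum_geometric_of_norm_lt_one (ξ := z * Complex.exp (θ * Complex.I))
    (by rwa [norm_mul, Complex.norm_exp_ofReal_mul_I, mul_one])
  rw [← one_sub_mul_exp_mul_one_sub_mul_exp_neg, div_mul_cancel_right₀
    (one_sub_mul_exp_ne_zero hz (-θ))]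
  refine hsum.congr_fun fun n => ?_
  rw [mul_pow, ← Complex.exp_nat_mul]
  push_cast
  ring_nf

lemma hasSum_pow_mul_cos (hz : ‖z‖ < 1) (θ : ℝ) :
    HasSum (fun n : ℕ => z ^ n * Real.cos (n * θ))
      ((1 - z * Real.cos θ) / (1 - 2 * z * Real.cos θ + z ^ 2)) := by
  have hsum := ((hasSum_pow_mul_exp hz θ).add (hasSum_pow_mul_exp hz (-θ))).div_const 2
  simp only [mul_neg, neg_neg, Real.cos_neg, Complex.exp_mul_I, Complex.ofReal_neg,
    Complex.cos_neg, Complex.sin_neg, ← Complex.ofReal_cos] at hsum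
  refine (congrArg₂ HasSum (funext fun n => ?_) ?_).mp hsum
  · ring
  · ring

lemma hasSum_pow_mul_sin (hz : ‖z‖ < 1) (θ : ℝ) :
    HasSum (fun n : ℕ => z ^ n * Real.sin (n * θ))
      (z * Real.sin θ / (1 - 2 * z * Real.cos θ + z ^ 2)) := by
  have hsum :=
    ((hasSum_pow_mul_exp hz θ).sub (hasSum_pow_mul_exp hz (-θ))).mul_left (-Complex.I / 2)
  simp only [mul_neg, neg_neg, Real.cos_neg, Complex.exp_mul_I, Complex.ofReal_neg,
    Complex.cos_neg, Complex.sin_neg, ← Complex.ofReal_sin] at hsum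
  refine (congrArg₂ HasSum (funext fun n => ?_) ?_).mp hsum
  · linear_combination (-z ^ n * Real.sin (n * θ)) * Complex.I_sq
  · linear_combination
      (-z * Real.sin θ / (1 - 2 * z * Real.cos θ + z ^ 2)) * Complex.I_sq

end GeometricSeries

lemma hasSum_pow_mul_integral {α : Type*} [MeasurableSpace α] {μ : Measure α} {f S : α → ℂ}
    {a : ℕ → α → ℝ} {z : ℂ} (hz : ‖z‖ < 1) (hf : Integrable f μ)
    (ha : ∀ n, AEStronglyMeasurable (a n) μ) (ha1 : ∀ n t, |a n t| ≤ 1)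
    (hS : ∀ᵐ t ∂μ, HasSum (fun n => z ^ n * a n t) (S t)) :
    HasSum (fun n => z ^ n * ∫ t, a n t • f t ∂μ) (∫ t, S t * f t ∂μ) := by
  have haf (n) : Integrable (fun t => a n t • f t) μ := hf.bdd_smul 1 (ha n) (.of_forall (ha1 n))
  have hbound (n) : ∫ t, ‖z ^ n * a n t • f t‖ ∂μ ≤ ‖z‖ ^ n * ∫ t, ‖f t‖ ∂μ := by
    rw [← integral_const_mul]
    refine integral_mono ((haf n).const_mul _).norm (hf.norm.const_mul _) fun t => ?_
    simp only [norm_mul, norm_pow, norm_smul]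
    gcongr
    exact mul_le_of_le_one_left (norm_nonneg _) (ha1 n t)
  have hsum := hasSum_integral_of_summable_integral_norm (fun n => (haf n).const_mul (z ^ n))
    (.of_nonneg_of_le (fun n => integral_nonneg fun t => norm_nonneg _) hbound
      ((summable_geometric_of_lt_one (norm_nonneg z) hz).mul_right _))
  have htsum : ∫ t, S t * f t ∂μ = ∫ t, ∑' n, z ^ n * a n t • f t ∂μ :=
    integral_congr_ae (hS.mono fun t ht => by
      simpa only [Complex.real_smul, mul_assoc] using (ht.mul_right (f t)).tsum_eq.symm)
  simpa only [htsum, integral_const_mul] using hsum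

/-- The Cauchy transform `∫ f(t) / (t - w) dt` over `(-1, 1)`, off the interval; its boundary values
on the two sides of the interval recover both `f` and its finite Hilbert transform. -/
def cauchyTransform (f : ℝ → ℂ) (w : ℂ) : ℂ :=
  ∫ t, f t / (t - w) ∂μI

lemma integrable_div_sub {f : ℝ → ℂ} (hf : Integrable f μI) {w : ℂ}
    (hw : ∀ t ∈ Icc (-1 : ℝ) 1, (t : ℂ) - w ≠ 0) : Integrable (fun t => f t / (t - w)) μI := by
  have hcont : ContinuousOn (fun t : ℝ => ((t : ℂ) - w)⁻¹) (Icc (-1) 1) :=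
    ContinuousOn.inv₀ (by fun_prop) hw
  obtain ⟨C, hC⟩ := isCompact_Icc.exists_bound_of_continuousOn hcont
  simp only [div_eq_mul_inv]
  exact hf.mul_bdd ((hcont.mono Ioo_subset_Icc_self).aestronglyMeasurable measurableSet_Ioo)
    (ae_μI_mem_Icc.mono hC)

namespace IsChebyshevConjugate

variable {g h : ℝ → ℂ} {w : ℂ}

lemma integral_eq_zero (hgh : IsChebyshevConjugate g h) : ∫ t, h t ∂μI = 0 := by
  simpa using hgh 0

lemma integral_mul_eq (hgh : IsChebyshevConjugate g h) (hg : Integrable g μI) (hh : Integrable h μI)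
    {z : ℂ} (hz : ‖z‖ < 1) :
    ∫ t : ℝ, (1 - z * t) / (1 - 2 * z * t + z ^ 2) * h t ∂μI =
      ∫ t : ℝ, z * √(1 - t ^ 2) / (1 - 2 * z * t + z ^ 2) * g t ∂μI := by
  have := Real.continuous_arccos
  have hcos := hasSum_pow_mul_integral (μ := μI) (a := fun n t => Real.cos (n * Real.arccos t))
    (S := fun t => (1 - z * t) / (1 - 2 * z * t + z ^ 2)) hz hh
    (fun n => Continuous.aestronglyMeasurable (by fun_prop))
    (fun n t => Real.abs_cos_le_one _) <| by
    filter_upwards [ae_μI_mem_Icc] with t ht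
    simpa only [Real.cos_arccos ht.1 ht.2] using hasSum_pow_mul_cos hz (Real.arccos t)
  have hsin := hasSum_pow_mul_integral (μ := μI) (a := fun n t => Real.sin (n * Real.arccos t))
    (S := fun t => z * √(1 - t ^ 2) / (1 - 2 * z * t + z ^ 2)) hz hg
    (fun n => Continuous.aestronglyMeasurable (by fun_prop))
    (fun n t => Real.abs_sin_le_one _) <| by
    filter_upwards [ae_μI_mem_Icc] with t ht
    simpa only [Real.cos_arccos ht.1 ht.2, Real.sin_arccos] using
      hasSum_pow_mul_sin hz (Real.arccos t)
  simp only [hgh _] at hcos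
  exact hcos.unique hsin

lemma cauchyTransform_eq (hgh : IsChebyshevConjugate g h) (hg : Integrable g μI)
    (hh : Integrable h μI) {s : ℂ} (hs : s ^ 2 = w ^ 2 - 1) (hlt : ‖w - s‖ < 1) :
    cauchyTransform (fun t => (√(1 - t ^ 2) : ℂ) * g t) w = s * cauchyTransform h w := by
  have hzw : (w - s) * (w + s) = 1 := by linear_combination -hs
  have hz0 : w - s ≠ 0 := left_ne_zero_of_mul_eq_one hzw
  have hden (t : ℝ) : 1 - 2 * (w - s) * t + (w - s) ^ 2 = -2 * (w - s) * (t - w) := by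
    linear_combination hs
  have hw : ∀ t ∈ Icc (-1 : ℝ) 1, (t : ℂ) - w ≠ 0 := fun t ht h0 => by
    refine one_sub_two_mul_cos_add_sq_ne_zero hlt (Real.arccos t) ?_
    rw [Real.cos_arccos ht.1 ht.2, hden, h0, mul_zero]
  have hcos : ∫ t : ℝ, (1 - (w - s) * t) / (1 - 2 * (w - s) * t + (w - s) ^ 2) * h t ∂μI =
      -(s / 2) * cauchyTransform h w := by
    calc ∫ t : ℝ, (1 - (w - s) * t) / (1 - 2 * (w - s) * t + (w - s) ^ 2) * h t ∂μI
        = ∫ t : ℝ, ((1 / 2) * h t + -(s / 2) * (h t / (t - w))) ∂μI := by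
          refine integral_congr_ae (ae_μI_mem_Icc.mono fun t ht => ?_)
          have htw := hw t ht
          simp only [hden]
          field_simp
          linear_combination h t * hzw
      _ = -(s / 2) * cauchyTransform h w := by
          rw [integral_add (hh.const_mul _) ((integrable_div_sub hh hw).const_mul _),
            integral_const_mul, integral_const_mul, hgh.integral_eq_zero, mul_zero, zero_add,
            cauchyTransform]
  have hsin : ∫ t : ℝ, (w - s) * √(1 - t ^ 2) / (1 - 2 * (w - s) * t + (w - s) ^ 2) * g t ∂μI =
      -(1 / 2) * cauchyTransform (fun t => (√(1 - t ^ 2) : ℂ) * g t) w := by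
    rw [cauchyTransform, ← integral_const_mul]
    refine integral_congr_ae (ae_μI_mem_Icc.mono fun t ht => ?_)
    have htw := hw t ht
    simp only [hden]
    field_simp
  have hmain := hgh.integral_mul_eq hg hh hlt
  rw [hcos, hsin] at hmain
  linear_combination 2 * hmain

end IsChebyshevConjugate

section HalfPlanes

/-- The principal branch of `√(1 - w²)`, which off the real axis is `∓i` times the branch of
`√(w² - 1)` that is asymptotic to `w` at infinity. -/
def sqrtOneSubSq (w : ℂ) : ℂ := (1 - w ^ 2) ^ (2⁻¹ : ℂ)

variable {w : ℂ}

lemma sqrtOneSubSq_sq (w : ℂ) : sqrtOneSubSq w ^ 2 = 1 - w ^ 2 := by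
  rw [sqrtOneSubSq, ← Complex.cpow_mul_nat, Nat.cast_ofNat, inv_mul_cancel₀ two_ne_zero,
    Complex.cpow_one]

lemma sqrtOneSubSq_neg (w : ℂ) : sqrtOneSubSq (-w) = sqrtOneSubSq w := by
  rw [sqrtOneSubSq, neg_sq, sqrtOneSubSq]

lemma sqrtOneSubSq_re_nonneg (w : ℂ) : 0 ≤ (sqrtOneSubSq w).re := by
  rw [sqrtOneSubSq, Complex.cpow_inv_two_re]
  exact Real.sqrt_nonneg _

lemma continuousAt_sqrtOneSubSq {x : ℝ} (hx : x ∈ Ioo (-1 : ℝ) 1) :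
    ContinuousAt sqrtOneSubSq x := by
  refine ContinuousAt.cpow (by fun_prop) continuousAt_const (Or.inl ?_)
  have hre : (1 - (x : ℂ) ^ 2).re = 1 - x ^ 2 := by simp [← Complex.ofReal_pow]
  rw [hre]
  nlinarith [hx.1, hx.2]

lemma sqrtOneSubSq_ofReal {x : ℝ} (hx : x ∈ Icc (-1 : ℝ) 1) : sqrtOneSubSq x = √(1 - x ^ 2) := by
  rw [sqrtOneSubSq, Real.sqrt_eq_rpow, Complex.ofReal_cpow (by nlinarith [hx.1, hx.2])]
  norm_num

lemma norm_sub_I_mul_sqrtOneSubSq_lt_one (hw : 0 < w.im) :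
    ‖w - Complex.I * sqrtOneSubSq w‖ < 1 := by
  set a := (sqrtOneSubSq w).re
  set b := (sqrtOneSubSq w).im
  have hsq := sqrtOneSubSq_sq w
  have hre : a ^ 2 - b ^ 2 = 1 - w.re ^ 2 + w.im ^ 2 := by
    have hsq_re := congrArg Complex.re hsq
    simp only [sq, Complex.mul_re, Complex.sub_re, Complex.one_re] at hsq_re
    linarith
  have him : a * b = -(w.re * w.im) := by
    have hsq_im := congrArg Complex.im hsq
    simp only [sq, Complex.mul_im, Complex.sub_im, Complex.one_im] at hsq_im
    linarith
  have ha0 : 0 ≤ a := sqrtOneSubSq_re_nonneg w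
  have hax : 0 < w.re ^ 2 + a ^ 2 := by nlinarith [sq_nonneg b, sq_pos_of_pos hw]
  have hinner : 0 < a * w.im - b * w.re := by
    refine pos_of_mul_pos_right ?_ ha0
    calc (0 : ℝ) < w.im * (w.re ^ 2 + a ^ 2) := mul_pos hw hax
      _ = a * (a * w.im - b * w.re) := by linear_combination w.re * him
  have hprod : ‖w - Complex.I * sqrtOneSubSq w‖ * ‖w + Complex.I * sqrtOneSubSq w‖ = 1 := by
    rw [← norm_mul, ← norm_one (α := ℂ)]
    congr 1
    linear_combination hsq - sqrtOneSubSq w ^ 2 * Complex.I_sq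
  have hlt : ‖w - Complex.I * sqrtOneSubSq w‖ < ‖w + Complex.I * sqrtOneSubSq w‖ := by
    rw [← sq_lt_sq₀ (norm_nonneg _) (norm_nonneg _), ← Complex.normSq_eq_norm_sq,
      ← Complex.normSq_eq_norm_sq, Complex.normSq_apply, Complex.normSq_apply]
    simp only [Complex.sub_re, Complex.mul_re, Complex.I_re, zero_mul, Complex.I_im, one_mul,
      zero_sub, sub_neg_eq_add, Complex.sub_im, Complex.mul_im, zero_add, Complex.add_re,
      Complex.add_im]
    nlinarith
  nlinarith [norm_nonneg (w - Complex.I * sqrtOneSubSq w)]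

variable {g h : ℝ → ℂ}

lemma IsChebyshevConjugate.cauchyTransform_eq_of_im_pos (hgh : IsChebyshevConjugate g h)
    (hg : Integrable g μI) (hh : Integrable h μI) (hw : 0 < w.im) :
    cauchyTransform (fun t => (√(1 - t ^ 2) : ℂ) * g t) w =
      Complex.I * sqrtOneSubSq w * cauchyTransform h w := by
  refine hgh.cauchyTransform_eq hg hh ?_ (norm_sub_I_mul_sqrtOneSubSq_lt_one hw)
  rw [mul_pow, Complex.I_sq, sqrtOneSubSq_sq]
  ring

lemma IsChebyshevConjugate.cauchyTransform_eq_of_im_neg (hgh : IsChebyshevConjugate g h)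
    (hg : Integrable g μI) (hh : Integrable h μI) (hw : w.im < 0) :
    cauchyTransform (fun t => (√(1 - t ^ 2) : ℂ) * g t) w =
      -(Complex.I * sqrtOneSubSq w) * cauchyTransform h w := by
  refine hgh.cauchyTransform_eq hg hh ?_ ?_
  · rw [neg_sq, mul_pow, Complex.I_sq, sqrtOneSubSq_sq]
    ring
  · have hneg := norm_sub_I_mul_sqrtOneSubSq_lt_one (w := -w) (by simpa using hw)
    rwa [sqrtOneSubSq_neg, ← norm_neg, neg_sub', neg_neg] at hneg

end HalfPlanes

/-! ### Poisson integrals at Lebesgue points -/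

section DominatingSeries

variable {α : Type*} [MeasurableSpace α] {μ : Measure α}

lemma integral_le_tsum_integral_of_exists_le {f : α → ℝ} {φ : ℕ → α → ℝ} (hf : 0 ≤ f)
    (hfint : Integrable f μ) (hφ : ∀ j, 0 ≤ φ j) (hφint : ∀ j, Integrable (φ j) μ)
    (hsum : Summable fun j => ∫ t, φ j t ∂μ) (hle : ∀ t, ∃ j, f t ≤ φ j t) :
    ∫ t, f t ∂μ ≤ ∑' j, ∫ t, φ j t ∂μ := by
  have hnonneg (j) : 0 ≤ ∫ t, φ j t ∂μ := integral_nonneg (hφ j)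
  rw [← ENNReal.ofReal_le_ofReal_iff (tsum_nonneg hnonneg),
    ENNReal.ofReal_tsum_of_nonneg hnonneg hsum,
    ofReal_integral_eq_lintegral_ofReal hfint (.of_forall hf)]
  calc ∫⁻ t, ENNReal.ofReal (f t) ∂μ ≤ ∫⁻ t, ∑' j, ENNReal.ofReal (φ j t) ∂μ := by
        refine lintegral_mono fun t => ?_
        obtain ⟨j, hj⟩ := hle t
        exact (ENNReal.ofReal_le_ofReal hj).trans (ENNReal.le_tsum j)
    _ = ∑' j, ENNReal.ofReal (∫ t, φ j t ∂μ) := by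
        rw [lintegral_tsum fun j => (hφint j).aemeasurable.ennreal_ofReal]
        exact tsum_congr fun j =>
          (ofReal_integral_eq_lintegral_ofReal (hφint j) (.of_forall (hφ j))).symm

end DominatingSeries

/-- The Poisson kernel of the half-plane at height `ε`, up to the factor `π`. -/
def halfPlanePoissonKernel (ε s : ℝ) : ℝ := ε / (ε ^ 2 + s ^ 2)

section HalfPlaneKernel

variable {ε : ℝ}

lemma halfPlanePoissonKernel_nonneg (hε : 0 < ε) (s : ℝ) : 0 ≤ halfPlanePoissonKernel ε s := by
  unfold halfPlanePoissonKernel; positivity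

lemma halfPlanePoissonKernel_eq (hε : 0 < ε) (s : ℝ) :
    halfPlanePoissonKernel ε s = ε⁻¹ * (1 + (s / ε) ^ 2)⁻¹ := by
  unfold halfPlanePoissonKernel; field_simp

lemma halfPlanePoissonKernel_le_inv (hε : 0 < ε) (s : ℝ) : halfPlanePoissonKernel ε s ≤ ε⁻¹ := by
  rw [halfPlanePoissonKernel_eq hε]
  exact mul_le_of_le_one_right (by positivity)
    (inv_le_one_of_one_le₀ (le_add_of_nonneg_right (sq_nonneg _)))

lemma measurable_halfPlanePoissonKernel (ε : ℝ) : Measurable (halfPlanePoissonKernel ε) := by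
  unfold halfPlanePoissonKernel; fun_prop

lemma integrable_halfPlanePoissonKernel (hε : 0 < ε) : Integrable (halfPlanePoissonKernel ε) := by
  rw [funext (halfPlanePoissonKernel_eq hε)]
  exact (integrable_inv_one_add_sq.comp_div hε.ne').const_mul _

lemma integral_halfPlanePoissonKernel (hε : 0 < ε) : ∫ s, halfPlanePoissonKernel ε s = π := by
  simp only [halfPlanePoissonKernel_eq hε]
  rw [integral_const_mul, Measure.integral_comp_div (fun s : ℝ => (1 + s ^ 2)⁻¹),
    integral_univ_inv_one_add_sq, abs_of_pos hε, smul_eq_mul, inv_mul_cancel_left₀ hε.ne']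

lemma exists_halfPlanePoissonKernel_le (hε : 0 < ε) (s : ℝ) :
    ∃ j : ℕ, |s| ≤ 2 ^ j * ε ∧ halfPlanePoissonKernel ε s ≤ 4 / (4 ^ j * ε) := by
  rcases le_total |s| ε with hs | hs
  · refine ⟨0, by simpa using hs, (halfPlanePoissonKernel_le_inv hε s).trans ?_⟩
    rw [pow_zero, one_mul, inv_eq_one_div]
    gcongr
    norm_num
  · obtain ⟨n, hn, hn1⟩ := exists_nat_pow_near ((one_le_div hε).2 hs) one_lt_two
    refine ⟨n + 1, ((div_lt_iff₀ hε).1 hn1).le, ?_⟩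
    have hns : 4 ^ n * ε ^ 2 ≤ s ^ 2 := by
      calc
        (4 : ℝ) ^ n * ε ^ 2 = (2 ^ n * ε) ^ 2 := by
          rw [mul_pow, ← pow_mul, mul_comm n, pow_mul]; norm_num
        _ ≤ |s| ^ 2 := by gcongr; exact (le_div_iff₀ hε).1 hn
        _ = s ^ 2 := sq_abs s
    rw [halfPlanePoissonKernel, div_le_div_iff₀ (by positivity) (by positivity), pow_succ]
    nlinarith [sq_nonneg ε]

end HalfPlaneKernel

section LebesguePoint

variable {E : Type*} [NormedAddCommGroup E] {f : ℝ → E} {x : ℝ}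

/-- `x` is a Lebesgue point of `f`: the mean oscillation of `f` around `f x` over the balls centred
at `x` tends to `0` with the radius. -/
def IsLebesguePoint (f : ℝ → E) (x : ℝ) : Prop :=
  Tendsto (fun ρ => ⨍ t in Metric.closedBall x ρ, ‖f t - f x‖) (𝓝[>] 0) (𝓝 0)

lemma ae_isLebesguePoint (hf : LocallyIntegrable f) : ∀ᵐ x, IsLebesguePoint f x := by
  filter_upwards [IsUnifLocDoublingMeasure.ae_tendsto_average_norm_sub volume hf 1] with x hx
  refine hx (fun _ => x) id tendsto_id ?_
  filter_upwards [self_mem_nhdsWithin] with ρ hρ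
  exact Metric.mem_closedBall_self (by simpa using hρ.out.le)

lemma integrableOn_closedBall_norm_sub (hf : Integrable f) (x ρ : ℝ) :
    IntegrableOn (fun t => ‖f t - f x‖) (Metric.closedBall x ρ) :=
  (hf.integrableOn.sub (integrableOn_const measure_closedBall_lt_top.ne)).norm

lemma setIntegral_closedBall_eq_mul_average {φ : ℝ → ℝ} {ρ : ℝ} (hρ : 0 < ρ) :
    ∫ t in Metric.closedBall x ρ, φ t = 2 * ρ * ⨍ t in Metric.closedBall x ρ, φ t := by
  rw [setAverage_eq, Real.volume_real_closedBall hρ.le, smul_eq_mul,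
    mul_inv_cancel_left₀ (by positivity)]

lemma average_closedBall_norm_sub_nonneg (f : ℝ → E) (x ρ : ℝ) :
    0 ≤ ⨍ t in Metric.closedBall x ρ, ‖f t - f x‖ :=
  integral_nonneg fun _ => norm_nonneg _

lemma average_closedBall_norm_sub_le (hf : Integrable f) (x : ℝ) {ρ : ℝ} (hρ : 0 < ρ) :
    ⨍ t in Metric.closedBall x ρ, ‖f t - f x‖ ≤ (2 * ρ)⁻¹ * (∫ t, ‖f t‖) + ‖f x‖ := by
  have hconst : IntegrableOn (fun _ => ‖f x‖) (Metric.closedBall x ρ) :=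
    integrableOn_const measure_closedBall_lt_top.ne
  have hball : ∫ t in Metric.closedBall x ρ, ‖f t - f x‖ ≤ (∫ t, ‖f t‖) + 2 * ρ * ‖f x‖ := by
    calc ∫ t in Metric.closedBall x ρ, ‖f t - f x‖
        ≤ ∫ t in Metric.closedBall x ρ, (‖f t‖ + ‖f x‖) :=
          setIntegral_mono (integrableOn_closedBall_norm_sub hf x ρ)
            (hf.norm.integrableOn.add hconst) fun _ => norm_sub_le _ _
      _ = (∫ t in Metric.closedBall x ρ, ‖f t‖) + 2 * ρ * ‖f x‖ := by
          rw [integral_add hf.norm.integrableOn hconst, setIntegral_const,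
            Real.volume_real_closedBall hρ.le, smul_eq_mul]
      _ ≤ (∫ t, ‖f t‖) + 2 * ρ * ‖f x‖ := by
          gcongr ?_ + _
          exact setIntegral_le_integral hf.norm (.of_forall fun _ => norm_nonneg _)
  rw [setAverage_eq, Real.volume_real_closedBall hρ.le, smul_eq_mul]
  calc (2 * ρ)⁻¹ * ∫ t in Metric.closedBall x ρ, ‖f t - f x‖
      ≤ (2 * ρ)⁻¹ * ((∫ t, ‖f t‖) + 2 * ρ * ‖f x‖) := by gcongr
    _ = (2 * ρ)⁻¹ * (∫ t, ‖f t‖) + ‖f x‖ := by field_simp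

lemma IsLebesguePoint.exists_average_le (hx : IsLebesguePoint f x) (hf : Integrable f) :
    ∃ C, ∀ ρ > 0, ⨍ t in Metric.closedBall x ρ, ‖f t - f x‖ ≤ C := by
  obtain ⟨δ, hδ, hδ1⟩ := mem_nhdsGT_iff_exists_Ioo_subset.1 (hx.eventually_le_const zero_lt_one)
  have hδ0 : 0 < δ := hδ
  refine ⟨max 1 ((2 * δ)⁻¹ * (∫ t, ‖f t‖) + ‖f x‖), fun ρ hρ => ?_⟩
  rcases lt_or_ge ρ δ with hρδ | hρδ
  · exact le_max_of_le_left (hδ1 ⟨hρ, hρδ⟩)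
  · refine le_max_of_le_right ((average_closedBall_norm_sub_le hf x hρ).trans ?_)
    gcongr

lemma integrable_halfPlanePoissonKernel_mul_norm_sub (hf : Integrable f) (x : ℝ) {ε : ℝ}
    (hε : 0 < ε) : Integrable fun t => halfPlanePoissonKernel ε (t - x) * ‖f t - f x‖ := by
  have hP := (integrable_halfPlanePoissonKernel hε).comp_sub_right x
  have hbdd (t) : ‖halfPlanePoissonKernel ε (t - x)‖ ≤ ε⁻¹ := by
    rw [Real.norm_of_nonneg (halfPlanePoissonKernel_nonneg hε _)]
    exact halfPlanePoissonKernel_le_inv hε _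
  have hmeas : AEStronglyMeasurable (fun t => ‖f t - f x‖) :=
    (hf.aestronglyMeasurable.sub aestronglyMeasurable_const).norm
  refine ((hf.norm.bdd_mul hP.aestronglyMeasurable (.of_forall hbdd)).add
    (hP.mul_const ‖f x‖)).mono' (hP.aestronglyMeasurable.mul hmeas) (.of_forall fun t => ?_)
  rw [Real.norm_of_nonneg (mul_nonneg (halfPlanePoissonKernel_nonneg hε _) (norm_nonneg _)),
    Pi.add_apply, ← mul_add]
  exact mul_le_mul_of_nonneg_left (norm_sub_le _ _) (halfPlanePoissonKernel_nonneg hε _)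

lemma integral_halfPlanePoissonKernel_mul_norm_sub_le (hx : IsLebesguePoint f x)
    (hf : Integrable f) {ε : ℝ} (hε : 0 < ε) :
    ∫ t, halfPlanePoissonKernel ε (t - x) * ‖f t - f x‖ ≤
      ∑' j : ℕ, 8 * (1 / 2) ^ j * ⨍ t in Metric.closedBall x (2 ^ j * ε), ‖f t - f x‖ := by
  obtain ⟨C, hC⟩ := hx.exists_average_le hf
  let φ (j : ℕ) (t : ℝ) : ℝ :=
    (Metric.closedBall x (2 ^ j * ε)).indicator (fun t => 4 / (4 ^ j * ε) * ‖f t - f x‖) t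
  have hφint (j) : Integrable (φ j) :=
    (integrable_indicator_iff measurableSet_closedBall).2
      ((integrableOn_closedBall_norm_sub hf x _).const_mul _)
  have hφ (j) : 0 ≤ φ j := indicator_nonneg fun t _ => by positivity
  have hint (j) : ∫ t, φ j t =
      8 * (1 / 2) ^ j * ⨍ t in Metric.closedBall x (2 ^ j * ε), ‖f t - f x‖ := by
    rw [integral_indicator measurableSet_closedBall, integral_const_mul,
      setIntegral_closedBall_eq_mul_average (by positivity), ← mul_assoc]
    congr 1
    rw [show (4 : ℝ) ^ j = 2 ^ j * 2 ^ j by rw [← mul_pow]; norm_num, one_div, inv_pow]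
    field_simp
    norm_num
  have hsum : Summable fun j => ∫ t, φ j t := by
    refine .of_nonneg_of_le (fun j => integral_nonneg (hφ j)) (fun j => ?_)
      ((summable_geometric_two.mul_left 8).mul_right C)
    rw [hint]
    gcongr
    exact hC _ (by positivity)
  simp only [← hint]
  refine integral_le_tsum_integral_of_exists_le
    (fun t => mul_nonneg (halfPlanePoissonKernel_nonneg hε _) (norm_nonneg _))
    (integrable_halfPlanePoissonKernel_mul_norm_sub hf x hε) hφ hφint hsum fun t => ?_
  obtain ⟨j, hj, hle⟩ := exists_halfPlanePoissonKernel_le hε (t - x)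
  refine ⟨j, ?_⟩
  simp only [φ]
  rw [indicator_of_mem (by rwa [Metric.mem_closedBall, Real.dist_eq])]
  gcongr

lemma IsLebesguePoint.tendsto_integral_halfPlanePoissonKernel_mul_norm_sub
    (hx : IsLebesguePoint f x) (hf : Integrable f) :
    Tendsto (fun ε => ∫ t, halfPlanePoissonKernel ε (t - x) * ‖f t - f x‖) (𝓝[>] 0) (𝓝 0) := by
  obtain ⟨C, hC⟩ := hx.exists_average_le hf
  have hdyadic : Tendsto (fun ε => ∑' j : ℕ, 8 * (1 / 2) ^ j *
      ⨍ t in Metric.closedBall x (2 ^ j * ε), ‖f t - f x‖) (𝓝[>] 0) (𝓝 (∑' _ : ℕ, (0 : ℝ))) := by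
    refine tendsto_tsum_of_dominated_convergence
      ((summable_geometric_two.mul_left 8).mul_right C) (fun j => ?_) ?_
    · have hscale : Tendsto (fun ε : ℝ => 2 ^ j * ε) (𝓝[>] 0) (𝓝[>] 0) := by
        refine tendsto_nhdsWithin_iff.2 ⟨?_, ?_⟩
        · exact ((continuous_const_mul (2 ^ j : ℝ)).tendsto' 0 0 (mul_zero _)).mono_left inf_le_left
        · filter_upwards [self_mem_nhdsWithin] with ε hε
          exact mul_pos (pow_pos two_pos j) (mem_Ioi.1 hε)
      simpa only [mul_zero, Function.comp_def] using (hx.comp hscale).const_mul (8 * (1 / 2) ^ j)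
    · filter_upwards [self_mem_nhdsWithin] with ε hε j
      rw [Real.norm_of_nonneg
        (mul_nonneg (by positivity) (average_closedBall_norm_sub_nonneg f x _))]
      gcongr
      exact hC _ (mul_pos (by positivity) hε)
  rw [tsum_zero] at hdyadic
  refine squeeze_zero' ?_ ?_ hdyadic
  · filter_upwards [self_mem_nhdsWithin] with ε hε
    exact integral_nonneg fun t => mul_nonneg (halfPlanePoissonKernel_nonneg hε _) (norm_nonneg _)
  · filter_upwards [self_mem_nhdsWithin] with ε hε
    exact integral_halfPlanePoissonKernel_mul_norm_sub_le hx hf hε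

lemma IsLebesguePoint.tendsto_integral_smul [NormedSpace ℝ E] [CompleteSpace E]
    (hx : IsLebesguePoint f x) (hf : Integrable f) {k : ℝ → ℝ → ℝ} {L : ℝ}
    (hk : ∀ ε > 0, Measurable (k ε)) (hkP : ∀ ε > 0, ∀ s, |k ε s| ≤ halfPlanePoissonKernel ε s)
    (hkL : ∀ ε > 0, ∫ s, k ε s = L) :
    Tendsto (fun ε => ∫ t, k ε (t - x) • f t) (𝓝[>] 0) (𝓝 (L • f x)) := by
  rw [tendsto_iff_norm_sub_tendsto_zero]
  refine squeeze_zero' (.of_forall fun _ => norm_nonneg _) ?_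
    (hx.tendsto_integral_halfPlanePoissonKernel_mul_norm_sub hf)
  filter_upwards [self_mem_nhdsWithin] with ε hε
  have hkint : Integrable (fun t => k ε (t - x)) :=
    ((integrable_halfPlanePoissonKernel hε).mono' (hk ε hε).aestronglyMeasurable
      (.of_forall (hkP ε hε))).comp_sub_right x
  have hkf : Integrable (fun t => k ε (t - x) • f t) :=
    hf.bdd_smul ε⁻¹ hkint.aestronglyMeasurable
      (.of_forall fun t => (hkP ε hε _).trans (halfPlanePoissonKernel_le_inv hε _))
  have hconst : ∫ t, k ε (t - x) • f x = L • f x := by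
    rw [integral_smul_const, integral_sub_right_eq_self (k ε), hkL ε hε]
  rw [← hconst, ← integral_sub hkf (hkint.smul_const _)]
  refine norm_integral_le_of_norm_le (integrable_halfPlanePoissonKernel_mul_norm_sub hf x hε)
    (.of_forall fun t => ?_)
  rw [← smul_sub, norm_smul]
  gcongr
  exact hkP ε hε _

end LebesguePoint

/-! ### Boundary values of the Cauchy transform -/

/-- The conjugate Poisson kernel of the half-plane at height `ε`, up to the factor `π`. -/
def halfPlaneConjugateKernel (ε s : ℝ) : ℝ := s / (ε ^ 2 + s ^ 2)

/-- The truncation of `s⁻¹` to `ε ≤ |s|`, the kernel of the truncated Hilbert transform up to the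
factor `π`. -/
def truncatedInv (ε s : ℝ) : ℝ := if ε ≤ |s| then s⁻¹ else 0

section Kernels

variable {ε : ℝ}

lemma measurable_halfPlaneConjugateKernel (ε : ℝ) : Measurable (halfPlaneConjugateKernel ε) := by
  unfold halfPlaneConjugateKernel; fun_prop

lemma measurable_truncatedInv (ε : ℝ) : Measurable (truncatedInv ε) :=
  Measurable.ite (measurableSet_le measurable_const measurable_norm) measurable_inv
    measurable_const

lemma abs_halfPlaneConjugateKernel_le_inv (hε : 0 < ε) (s : ℝ) :
    |halfPlaneConjugateKernel ε s| ≤ ε⁻¹ := by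
  rw [halfPlaneConjugateKernel, abs_div, abs_of_pos (by positivity : 0 < ε ^ 2 + s ^ 2),
    inv_eq_one_div, div_le_div_iff₀ (by positivity) hε, ← sq_abs s]
  nlinarith [sq_nonneg (|s| - ε), sq_nonneg s, sq_nonneg ε]

lemma abs_truncatedInv_le_inv (hε : 0 < ε) (s : ℝ) : |truncatedInv ε s| ≤ ε⁻¹ := by
  rw [truncatedInv]
  split_ifs with hs
  · rw [abs_inv]
    exact inv_anti₀ hε hs
  · rw [abs_zero]
    exact inv_nonneg.2 hε.le

lemma abs_halfPlaneConjugateKernel_sub_truncatedInv_le (hε : 0 < ε) (s : ℝ) :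
    |halfPlaneConjugateKernel ε s - truncatedInv ε s| ≤ halfPlanePoissonKernel ε s := by
  rw [halfPlaneConjugateKernel, truncatedInv, halfPlanePoissonKernel]
  have hpos : 0 < ε ^ 2 + s ^ 2 := by positivity
  split_ifs with hs
  · have hs0 : 0 < |s| := hε.trans_le hs
    have hdiff : s / (ε ^ 2 + s ^ 2) - s⁻¹ = -(ε ^ 2 / s / (ε ^ 2 + s ^ 2)) := by
      have := abs_pos.1 hs0
      field_simp
      ring
    rw [hdiff, abs_neg, abs_div, abs_of_pos hpos, abs_div, abs_of_nonneg (sq_nonneg ε)]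
    gcongr
    rw [div_le_iff₀ hs0, sq]
    gcongr
  · rw [sub_zero, abs_div, abs_of_pos hpos]
    gcongr
    exact (not_le.1 hs).le

lemma integral_halfPlaneConjugateKernel_sub_truncatedInv (ε : ℝ) :
    ∫ s, (halfPlaneConjugateKernel ε s - truncatedInv ε s) = 0 := by
  have hodd (s : ℝ) : halfPlaneConjugateKernel ε (-s) - truncatedInv ε (-s) =
      -(halfPlaneConjugateKernel ε s - truncatedInv ε s) := by
    simp only [halfPlaneConjugateKernel, truncatedInv, abs_neg, neg_sq, inv_neg, neg_div]
    split_ifs <;> ring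
  have hneg :=
    integral_neg_eq_self (fun s => halfPlaneConjugateKernel ε s - truncatedInv ε s) volume
  simp only [hodd, integral_neg] at hneg
  linarith

lemma inv_ofReal_add_mul_I (hε : ε ≠ 0) (s : ℝ) : ((s : ℂ) + ε * Complex.I)⁻¹ =
    halfPlaneConjugateKernel ε s - halfPlanePoissonKernel ε s * Complex.I := by
  have hne : (ε : ℂ) ^ 2 + s ^ 2 ≠ 0 := by
    norm_cast
    positivity
  refine inv_eq_of_mul_eq_one_right ?_
  rw [halfPlaneConjugateKernel, halfPlanePoissonKernel]
  push_cast
  field_simp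
  linear_combination -(ε : ℂ) ^ 2 * Complex.I_sq

lemma inv_ofReal_sub_mul_I (hε : ε ≠ 0) (s : ℝ) : ((s : ℂ) - ε * Complex.I)⁻¹ =
    halfPlaneConjugateKernel ε s + halfPlanePoissonKernel ε s * Complex.I := by
  have hneg := inv_ofReal_add_mul_I (neg_ne_zero.2 hε) s
  simpa [halfPlaneConjugateKernel, halfPlanePoissonKernel, neg_div, ← sub_eq_add_neg] using hneg

end Kernels

lemma ae_tendsto_integral_smul {f : ℝ → ℂ} (hf : Integrable f μI) {k : ℝ → ℝ → ℝ} {L : ℝ}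
    (hk : ∀ ε > 0, Measurable (k ε)) (hkP : ∀ ε > 0, ∀ s, |k ε s| ≤ halfPlanePoissonKernel ε s)
    (hkL : ∀ ε > 0, ∫ s, k ε s = L) :
    ∀ᵐ x ∂μI, Tendsto (fun ε => ∫ t, k ε (t - x) • f t ∂μI) (𝓝[>] 0) (𝓝 (L • f x)) := by
  have hF : Integrable ((Ioo (-1) 1).indicator f) :=
    (integrable_indicator_iff measurableSet_Ioo).2 hf
  filter_upwards [ae_restrict_of_ae (ae_isLebesguePoint hF.locallyIntegrable), ae_μI_mem_Ioo]
    with x hx hxI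
  have hsmul (ε t : ℝ) : k ε (t - x) • (Ioo (-1) 1).indicator f t =
      (Ioo (-1) 1).indicator (fun t => k ε (t - x) • f t) t :=
    (indicator_smul_apply _ (fun t => k ε (t - x)) f t).symm
  simpa only [hsmul, indicator_of_mem hxI, integral_indicator measurableSet_Ioo, μI]
    using hx.tendsto_integral_smul hF hk hkP hkL

section Plemelj

variable {f : ℝ → ℂ} {x ε : ℝ}

lemma integrable_comp_sub_smul {μ : Measure ℝ} (hf : Integrable f μ) {k : ℝ → ℝ} {C : ℝ}
    (hk : Measurable k) (hkC : ∀ s, |k s| ≤ C) (x : ℝ) :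
    Integrable (fun t => k (t - x) • f t) μ :=
  hf.bdd_smul C (hk.comp (measurable_id.sub_const x)).aestronglyMeasurable
    (.of_forall fun _ => hkC _)

lemma integrable_halfPlanePoissonKernel_smul (hf : Integrable f μI) (x : ℝ) (hε : 0 < ε) :
    Integrable (fun t => halfPlanePoissonKernel ε (t - x) • f t) μI :=
  integrable_comp_sub_smul hf (measurable_halfPlanePoissonKernel ε)
    (fun s => (abs_of_nonneg (halfPlanePoissonKernel_nonneg hε s)).trans_le
      (halfPlanePoissonKernel_le_inv hε s)) x

lemma integrable_halfPlaneConjugateKernel_smul (hf : Integrable f μI) (x : ℝ) (hε : 0 < ε) :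
    Integrable (fun t => halfPlaneConjugateKernel ε (t - x) • f t) μI :=
  integrable_comp_sub_smul hf (measurable_halfPlaneConjugateKernel ε)
    (abs_halfPlaneConjugateKernel_le_inv hε) x

lemma cauchyTransform_add_mul_I (hf : Integrable f μI) (x : ℝ) (hε : 0 < ε) :
    cauchyTransform f (x + ε * Complex.I) = (∫ t, halfPlaneConjugateKernel ε (t - x) • f t ∂μI) +
      Complex.I * ∫ t, halfPlanePoissonKernel ε (t - x) • f t ∂μI := by
  rw [cauchyTransform, ← integral_const_mul,
    ← integral_add (integrable_halfPlaneConjugateKernel_smul hf x hε)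
      ((integrable_halfPlanePoissonKernel_smul hf x hε).const_mul _)]
  congr 1 with t
  rw [show (t : ℂ) - (x + ε * Complex.I) = (t - x : ℝ) - ε * Complex.I by push_cast; ring,
    div_eq_inv_mul, inv_ofReal_sub_mul_I hε.ne', Complex.real_smul, Complex.real_smul]
  ring

lemma cauchyTransform_sub_mul_I (hf : Integrable f μI) (x : ℝ) (hε : 0 < ε) :
    cauchyTransform f (x - ε * Complex.I) = (∫ t, halfPlaneConjugateKernel ε (t - x) • f t ∂μI) -
      Complex.I * ∫ t, halfPlanePoissonKernel ε (t - x) • f t ∂μI := by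
  rw [cauchyTransform, ← integral_const_mul,
    ← integral_sub (integrable_halfPlaneConjugateKernel_smul hf x hε)
      ((integrable_halfPlanePoissonKernel_smul hf x hε).const_mul _)]
  congr 1 with t
  rw [show (t : ℂ) - (x - ε * Complex.I) = (t - x : ℝ) + ε * Complex.I by push_cast; ring,
    div_eq_inv_mul, inv_ofReal_add_mul_I hε.ne', Complex.real_smul, Complex.real_smul]
  ring

lemma ae_tendsto_cauchyTransform_sub (hf : Integrable f μI) :
    ∀ᵐ x : ℝ ∂μI, Tendsto (fun ε : ℝ => cauchyTransform f (x + ε * Complex.I) -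
      cauchyTransform f (x - ε * Complex.I)) (𝓝[>] 0) (𝓝 (2 * π * Complex.I * f x)) := by
  filter_upwards [ae_tendsto_integral_smul hf (fun ε _ => measurable_halfPlanePoissonKernel ε)
    (fun ε hε s => (abs_of_nonneg (halfPlanePoissonKernel_nonneg hε s)).le)
    (fun ε hε => integral_halfPlanePoissonKernel hε)] with x hx
  have hlim := hx.const_mul (2 * Complex.I)
  rw [Complex.real_smul, show 2 * Complex.I * (π * f x) = 2 * π * Complex.I * f x by ring] at hlim
  refine hlim.congr' ?_
  filter_upwards [self_mem_nhdsWithin] with ε hε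
  rw [cauchyTransform_add_mul_I hf x hε, cauchyTransform_sub_mul_I hf x hε]
  ring

lemma FHT_eq_limUnder (f : ℝ → ℂ) (x : ℝ) :
    FHT f x = limUnder (𝓝[>] 0) fun ε => (π : ℂ)⁻¹ * ∫ t, truncatedInv ε (t - x) • f t ∂μI := by
  rw [FHT]
  congr 1 with ε
  have hmeas : MeasurableSet {t : ℝ | ε ≤ |t - x|} :=
    measurableSet_le measurable_const (by fun_prop)
  have hset : {t : ℝ | t ∈ Ioo (-1 : ℝ) 1 ∧ ε ≤ |t - x|} = {t : ℝ | ε ≤ |t - x|} ∩ Ioo (-1) 1 :=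
    inter_comm _ _
  rw [hset, ← Measure.restrict_restrict hmeas, ← integral_indicator hmeas]
  congr 2 with t
  simp only [indicator_apply, mem_ofPred_eq, truncatedInv, Complex.real_smul]
  split_ifs
  · push_cast
    rw [div_eq_inv_mul]
  · rw [Complex.ofReal_zero, zero_mul]

lemma FHT_congr_ae {f' : ℝ → ℂ} (h : f =ᵐ[μI] f') : FHT f = FHT f' := by
  ext x
  simp only [FHT_eq_limUnder]
  congr 2 with ε
  congr 1
  exact integral_congr_ae (h.mono fun t ht => congrArg (truncatedInv ε (t - x) • ·) ht)

/-- The conjugate Poisson kernel differs from the truncated kernel by an odd kernel dominated by the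
Poisson kernel, so the two have the same limit at Lebesgue points. -/
lemma ae_forall_FHT_eq (hf : Integrable f μI) :
    ∀ᵐ x : ℝ ∂μI, ∀ a, Tendsto (fun ε : ℝ => cauchyTransform f (x + ε * Complex.I) +
      cauchyTransform f (x - ε * Complex.I)) (𝓝[>] 0) (𝓝 (2 * π * a)) → FHT f x = a := by
  filter_upwards [ae_tendsto_integral_smul hf
    (fun ε _ => (measurable_halfPlaneConjugateKernel ε).sub (measurable_truncatedInv ε))
    (fun ε hε => abs_halfPlaneConjugateKernel_sub_truncatedInv_le hε)
    (fun ε _ => integral_halfPlaneConjugateKernel_sub_truncatedInv ε)] with x hx a ha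
  rw [zero_smul] at hx
  rw [FHT_eq_limUnder]
  refine Tendsto.limUnder_eq ?_
  have hlim := ((ha.const_mul 2⁻¹).sub hx).const_mul (π : ℂ)⁻¹
  have hπ : (π : ℂ) ≠ 0 := Complex.ofReal_ne_zero.2 Real.pi_ne_zero
  rw [show (π : ℂ)⁻¹ * (2⁻¹ * (2 * π * a) - 0) = a by field_simp; ring] at hlim
  refine hlim.congr' ?_
  filter_upwards [self_mem_nhdsWithin] with ε hε
  have htrunc : Integrable (fun t => truncatedInv ε (t - x) • f t) μI :=
    integrable_comp_sub_smul hf (measurable_truncatedInv ε) (abs_truncatedInv_le_inv hε) x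
  simp only [Pi.sub_apply, sub_smul]
  rw [cauchyTransform_add_mul_I hf x hε, cauchyTransform_sub_mul_I hf x hε,
    integral_sub (integrable_halfPlaneConjugateKernel_smul hf x hε) htrunc]
  ring

end Plemelj

/-! ### Inversion -/

section BoundaryAlgebra

variable {α : Type*} {l : Filter α} {rp rm Hp Hm : α → ℂ} {σ J K : ℂ}

lemma tendsto_add_of_tendsto_sub (hσ : σ ≠ 0) (hrp : Tendsto rp l (𝓝 σ)) (hrm : Tendsto rm l (𝓝 σ))
    (hJ : Tendsto (fun a => Hp a - Hm a) l (𝓝 J))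
    (hK : Tendsto (fun a => rp a * Hp a + rm a * Hm a) l (𝓝 (σ * K))) :
    Tendsto (fun a => Hp a + Hm a) l (𝓝 K) := by
  have hsum := hrp.add hrm
  have hne : σ + σ ≠ 0 := by simpa [← two_mul] using hσ
  have hlim := ((hK.const_mul 2).sub ((hrp.sub hrm).mul hJ)).div hsum hne
  rw [show (2 * (σ * K) - (σ - σ) * J) / (σ + σ) = K by field_simp; ring] at hlim
  refine hlim.congr' ?_
  filter_upwards [hsum.eventually_ne hne] with a ha
  simp only [Pi.div_apply]
  rw [div_eq_iff ha]
  ring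

lemma tendsto_mul_sub_mul (hrp : Tendsto rp l (𝓝 σ)) (hrm : Tendsto rm l (𝓝 σ))
    (hJ : Tendsto (fun a => Hp a - Hm a) l (𝓝 J))
    (hK : Tendsto (fun a => Hp a + Hm a) l (𝓝 K)) :
    Tendsto (fun a => rp a * Hp a - rm a * Hm a) l (𝓝 (σ * J)) := by
  have hlim := (((hrp.add hrm).mul hJ).add ((hrp.sub hrm).mul hK)).const_mul 2⁻¹
  rw [show (2⁻¹ : ℂ) * ((σ + σ) * J + (σ - σ) * K) = σ * J by ring] at hlim
  exact hlim.congr fun a => by ring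

end BoundaryAlgebra

section Inversion

variable {g h : ℝ → ℂ}

lemma integrable_sqrt_one_sub_sq_mul (hg : Integrable g μI) :
    Integrable (fun t => (√(1 - t ^ 2) : ℂ) * g t) μI :=
  integrable_bounded_smul hg (φ := fun t => √(1 - t ^ 2)) (by fun_prop) fun t => by
    rw [abs_of_nonneg (Real.sqrt_nonneg _), Real.sqrt_le_one]
    linarith [sq_nonneg t]

lemma ofReal_sqrt_one_sub_sq_ne_zero {x : ℝ} (hx : x ∈ Ioo (-1 : ℝ) 1) : (√(1 - x ^ 2) : ℂ) ≠ 0 :=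
  Complex.ofReal_ne_zero.2 (Real.sqrt_pos.2 (by nlinarith [hx.1, hx.2])).ne'

lemma tendsto_sqrtOneSubSq {x : ℝ} (hx : x ∈ Ioo (-1 : ℝ) 1) (c : ℂ) :
    Tendsto (fun ε : ℝ => sqrtOneSubSq (x + ε * c)) (𝓝[>] 0) (𝓝 (√(1 - x ^ 2) : ℂ)) := by
  rw [← sqrtOneSubSq_ofReal (Ioo_subset_Icc_self hx)]
  refine (continuousAt_sqrtOneSubSq hx).tendsto.comp ?_
  have hcont : Continuous fun ε : ℝ => (x : ℂ) + ε * c := by fun_prop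
  exact (hcont.tendsto' 0 x (by simp)).mono_left inf_le_left

namespace IsChebyshevConjugate

/-- The Cauchy transforms of `h` and of `√(1 - t²) g(t)` differ by the factor `±i√(1 - w²)` on the
two half-planes. The change of sign turns the jump of each into the principal value of the other. -/
lemma ae_FHT_eq_and_FHT_mul_eq (hgh : IsChebyshevConjugate g h) (hg : Integrable g μI)
    (hh : Integrable h μI) :
    ∀ᵐ x : ℝ ∂μI, FHT h x = g x ∧
      FHT (fun t => (√(1 - t ^ 2) : ℂ) * g t) x = -(√(1 - x ^ 2) * h x) := by
  have hG := integrable_sqrt_one_sub_sq_mul hg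
  filter_upwards [ae_μI_mem_Ioo, ae_tendsto_cauchyTransform_sub hh,
    ae_tendsto_cauchyTransform_sub hG, ae_forall_FHT_eq hh, ae_forall_FHT_eq hG]
    with x hx hJh hJG hFh hFG
  have hσ := ofReal_sqrt_one_sub_sq_ne_zero hx
  have hrp := tendsto_sqrtOneSubSq hx Complex.I
  have hrm := tendsto_sqrtOneSubSq hx (-Complex.I)
  simp only [mul_neg, ← sub_eq_add_neg] at hrm
  have hGp (ε : ℝ) (hε : 0 < ε) := hgh.cauchyTransform_eq_of_im_pos (w := x + ε * Complex.I) hg hh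
    (by simpa using hε)
  have hGm (ε : ℝ) (hε : 0 < ε) := hgh.cauchyTransform_eq_of_im_neg (w := x - ε * Complex.I) hg hh
    (by simpa using hε)
  have hadd := tendsto_add_of_tendsto_sub (K := 2 * π * g x) hσ hrp hrm hJh ?_
  · refine ⟨hFh _ hadd, hFG _ ?_⟩
    have hlim := (tendsto_mul_sub_mul hrp hrm hJh hadd).const_mul Complex.I
    rw [show Complex.I * (√(1 - x ^ 2) * (2 * π * Complex.I * h x)) =
      2 * π * -(√(1 - x ^ 2) * h x) by linear_combination 2 * π * √(1 - x ^ 2) * h x * Complex.I_sq]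
      at hlim
    refine hlim.congr' ?_
    filter_upwards [self_mem_nhdsWithin] with ε hε
    rw [hGp ε hε, hGm ε hε]
    ring
  · have hlim := hJG.const_mul (-Complex.I)
    rw [show -Complex.I * (2 * π * Complex.I * (√(1 - x ^ 2) * g x)) =
      √(1 - x ^ 2) * (2 * π * g x) by linear_combination -2 * π * √(1 - x ^ 2) * g x * Complex.I_sq]
      at hlim
    refine hlim.congr' ?_
    filter_upwards [self_mem_nhdsWithin] with ε hε
    rw [hGp ε hε, hGm ε hε]
    linear_combination -(sqrtOneSubSq (x + ε * Complex.I) * cauchyTransform h (x + ε * Complex.I) +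
      sqrtOneSubSq (x - ε * Complex.I) * cauchyTransform h (x - ε * Complex.I)) * Complex.I_sq

lemma hatT_ae_eq (hgh : IsChebyshevConjugate g h) (hg : Integrable g μI) (hh : Integrable h μI) :
    hatT g =ᵐ[μI] h := by
  filter_upwards [hgh.ae_FHT_eq_and_FHT_mul_eq hg hh, ae_μI_mem_Ioo] with x ⟨_, hFG⟩ hx
  have hσ := ofReal_sqrt_one_sub_sq_ne_zero hx
  rw [hatT, hFG, neg_mul_neg, inv_mul_cancel_left₀ hσ]

end IsChebyshevConjugate

end Inversion

end FiniteHilbert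

/-- For `g ∈ L log L(-1,1)`: `T̂(g) ∈ L¹(-1,1)`, `T(T̂(g)) = g` a.e., and `∫ T̂(g) = 0`. -/
theorem hatT_section (g : ℝ → ℂ) (hg : MemLlogL g) :
    IntegrableOn (hatT g) (Set.Ioo (-1 : ℝ) 1) ∧
    (∀ᵐ x ∂μI, FHT (hatT g) x = g x) ∧
    ∫ x in Set.Ioo (-1 : ℝ) 1, hatT g x = 0 := by
  obtain ⟨h, hh, hgh⟩ := hg.exists_isChebyshevConjugate
  have hT : hatT g =ᵐ[μI] h := hgh.hatT_ae_eq hg.integrable hh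
  refine ⟨hh.congr hT.symm, ?_, (integral_congr_ae hT).trans hgh.integral_eq_zero⟩
  rw [FiniteHilbert.FHT_congr_ae hT]
  exact (hgh.ae_FHT_eq_and_FHT_mul_eq hg.integrable hh).mono fun _ hx => hx.1
end
end
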